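/- arXiv:2103.15712 — 2 statements merged into one kernel-verified Lean document; each statement's English description precedes it below -/
import Mathlib

section
/- Let n ≥ 1 be an integer and X a random variable binomially distributed with parameters n and 1/2. Let α ∈ ℝ with α ≥ √n and α + n/α ≤ n/2. Then Pr[X ≥ n/2 + α] ≥ (1/(1.5 · e^(169/6) · √(2π))) · (√n / α) · exp( −2α²/n − 4α³/n² ). -/
open MeasureTheory ProbabilityTheory Real

lemma aux_log_one_sub {y : ℝ} (h0 : 0 ≤ y) (h1 : y < 1) :
    Real.log (1 - y) ≤ -y - y ^ 2 / 2 := by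
  have h := Real.hasSum_pow_div_log_of_abs_lt_one (x := y) (by rwa [abs_of_nonneg h0])
  have h2 := sum_le_hasSum (Finset.range 2) (fun i _ => by positivity) h
  simp [Finset.sum_range_succ] at h2
  norm_num at h2
  linarith

lemma aux_log_one_add {y : ℝ} (h0 : 0 ≤ y) :
    Real.log (1 + y) ≤ y - y ^ 2 / 2 + y ^ 3 / 3 := by
  let F : ℝ → ℝ := fun x => x - x ^ 2 / 2 + x ^ 3 / 3 - Real.log (1 + x)
  have hder : ∀ x : ℝ, 0 ≤ x → HasDerivAt F (x ^ 3 / (1 + x)) x := by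
    intro x hx
    have hne : (1 + x) ≠ 0 := by positivity
    have h1 : HasDerivAt (fun x : ℝ => Real.log (1 + x)) (1 / (1 + x)) x :=
      ((hasDerivAt_id x).const_add 1).log hne
    have h2 := (((hasDerivAt_id x).sub (((hasDerivAt_id x).pow 2).div_const 2)).add
      (((hasDerivAt_id x).pow 3).div_const 3)).sub h1
    convert! h2 using 1
    simp
    field_simp
    ring
  have hmono : MonotoneOn F (Set.Ici 0) := by
    apply monotoneOn_of_deriv_nonneg (convex_Ici 0)
    · intro x hx
      exact (hder x hx).continuousAt.continuousWithinAt
    · intro x hx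
      rw [interior_Ici] at hx
      exact (hder x (le_of_lt hx)).differentiableAt.differentiableWithinAt
    · intro x hx
      rw [interior_Ici] at hx
      have hx' : 0 < x := hx
      rw [(hder x hx'.le).deriv]
      positivity
  have := hmono (Set.mem_Ici.2 le_rfl) (Set.mem_Ici.2 h0) h0
  simp [F] at this
  linarith

lemma aux_entropy {y : ℝ} (h0 : 0 ≤ y) (h1 : y < 1) :
    (1 + y) * Real.log (1 + y) + (1 - y) * Real.log (1 - y) ≤ y ^ 2 + y ^ 3 := by
  have a := mul_le_mul_of_nonneg_left (aux_log_one_add h0) (by linarith : 0 ≤ 1 + y)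
  have b := mul_le_mul_of_nonneg_left (aux_log_one_sub h0 h1) (by linarith : 0 ≤ 1 - y)
  have c : 0 ≤ y ^ 3 * (1 - y) := mul_nonneg (by positivity) (by linarith)
  have d : 0 ≤ y ^ 3 := by positivity
  nlinarith

lemma aux_log_fact {k : ℕ} (hk : 1 ≤ k) :
    Real.log (k.factorial : ℝ) ≤ 1 + Real.log k / 2 + k * Real.log k - k := by
  obtain ⟨m, rfl⟩ : ∃ m, k = m + 1 := ⟨k - 1, by omega⟩
  have h := Stirling.log_stirlingSeq'_antitone (Nat.zero_le m)
  simp only [Function.comp, Nat.succ_eq_add_one] at h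
  rw [Stirling.log_stirlingSeq_formula, Stirling.log_stirlingSeq_formula] at h
  have hp : ((m + 1 : ℕ) : ℝ) ≠ 0 := by positivity
  rw [Real.log_mul (by norm_num) hp, Real.log_div hp (Real.exp_pos 1).ne', Real.log_exp] at h
  simp at h
  push_cast
  linarith

lemma aux_point {n k : ℕ} (hn : 1 ≤ n) (hk : k ≤ n) (h2 : (n : ℝ) / 2 ≤ k) {b : ℝ}
    (hb : (k : ℝ) - n / 2 ≤ b) :
    Real.exp (-2 - Real.log n / 2 - 2 * b ^ 2 / n - 4 * b ^ 3 / (n : ℝ) ^ 2)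
      ≤ (n.choose k : ℝ) / 2 ^ n := by
  have hn0 : (0 : ℝ) < n := by exact_mod_cast hn
  have hn1 : (1 : ℝ) ≤ n := by exact_mod_cast hn
  have hlogn : 0 ≤ Real.log n := Real.log_nonneg hn1
  set b0 : ℝ := (k : ℝ) - n / 2 with hb0
  have hb0' : 0 ≤ b0 := by linarith
  have hmono : -2 - Real.log n / 2 - 2 * b ^ 2 / n - 4 * b ^ 3 / (n : ℝ) ^ 2
      ≤ -2 - Real.log n / 2 - 2 * b0 ^ 2 / n - 4 * b0 ^ 3 / (n : ℝ) ^ 2 := by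
    gcongr
  refine (Real.exp_le_exp.2 hmono).trans ?_
  have hl2 : Real.log 2 ≤ 1 := by linarith [Real.log_two_lt_d9]
  have hcpos : (0 : ℝ) < n.choose k := by exact_mod_cast Nat.choose_pos hk
  rw [← Real.le_log_iff_exp_le (by positivity), Real.log_div hcpos.ne' (by positivity),
    Real.log_pow]
  rcases hk.lt_or_eq with hlt | rfl
  · have hk1 : 1 ≤ k := by
      have : (0 : ℝ) < k := by linarith
      exact_mod_cast this
    have hk0 : (0 : ℝ) < k := by exact_mod_cast hk1
    have hm1 : 1 ≤ n - k := by omega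
    have hmc : ((n - k : ℕ) : ℝ) = (n : ℝ) - k := by push_cast [hk]; ring
    have hmpos : (0 : ℝ) < (n : ℝ) - k := by
      rw [← hmc]; exact_mod_cast hm1
    rw [Nat.cast_choose ℝ hk, Real.log_div (by positivity) (by positivity),
      Real.log_mul (by positivity) (by positivity)]
    have e1 := Stirling.le_log_factorial_stirling (n := n) (by omega)
    have e2 := aux_log_fact hk1
    have e3 := aux_log_fact hm1
    rw [hmc] at e3
    have e4 : 0 ≤ Real.log (2 * Real.pi) :=
      Real.log_nonneg (by nlinarith [Real.pi_gt_three])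
    have e5 : Real.log k ≤ Real.log n := Real.log_le_log hk0 (by exact_mod_cast hk)
    have e6 : Real.log ((n : ℝ) - k) ≤ Real.log n := Real.log_le_log hmpos (by linarith)
    set y : ℝ := 2 * b0 / n with hy
    have hyn : y * n = 2 * b0 := by rw [hy]; field_simp
    have hy0 : 0 ≤ y := by positivity
    have hy1 : y < 1 := by rw [hy, div_lt_one hn0]; linarith
    have e7 := mul_le_mul_of_nonneg_left (aux_entropy hy0 hy1) (by positivity : 0 ≤ (n : ℝ) / 2)
    have f1 : Real.log k = Real.log n - Real.log 2 + Real.log (1 + y) := by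
      rw [← Real.log_div hn0.ne' (by norm_num), ← Real.log_mul (by positivity) (by positivity)]
      congr 1
      linarith
    have f2 : Real.log ((n : ℝ) - k) = Real.log n - Real.log 2 + Real.log (1 - y) := by
      rw [← Real.log_div hn0.ne' (by norm_num), ← Real.log_mul (by positivity) (by linarith)]
      congr 1
      linarith
    have g : (n : ℝ) / 2 * (y ^ 2 + y ^ 3) = 2 * b0 ^ 2 / n + 4 * b0 ^ 3 / (n : ℝ) ^ 2 := by
      rw [hy]; field_simp; ring
    have g2 : (k : ℝ) * Real.log k + ((n : ℝ) - k) * Real.log ((n : ℝ) - k)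
        = n * Real.log n - n * Real.log 2
          + n / 2 * ((1 + y) * Real.log (1 + y) + (1 - y) * Real.log (1 - y)) := by
      rw [f1, f2]
      have : (k : ℝ) = n / 2 * (1 + y) := by linarith
      rw [this]; ring
    linarith
  · have hb : b0 = k / 2 := by rw [hb0]; ring
    have g : 2 * b0 ^ 2 / k + 4 * b0 ^ 3 / (k : ℝ) ^ 2 = k := by
      rw [hb]; field_simp; ring
    have : (k : ℝ) * Real.log 2 ≤ k * 1 := mul_le_mul_of_nonneg_left hl2 hn0.le
    simp
    linarith

lemma aux_t1 {N α q : ℝ} (hN : 0 < N) (hα : 0 < α) (hq : 0 < q) (hqa : q ≤ α)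
    (h : q * α = N) : 2 * (α + q) ^ 2 / N ≤ 2 * α ^ 2 / N + 6 := by
  rw [div_add' _ _ _ hN.ne', div_le_div_iff_of_pos_right hN]
  have : q * q ≤ q * α := mul_le_mul_of_nonneg_left hqa hq.le
  nlinarith

lemma aux_t2 {N α q : ℝ} (hN : 0 < N) (hq : 0 < q) (hα : 2 ≤ α) (hαN : α ≤ N / 2)
    (hqa : q ≤ α) (h : q * α = N) :
    4 * (α + q) ^ 3 / N ^ 2 ≤ 4 * α ^ 3 / N ^ 2 + 14 := by
  rw [div_add' _ _ _ (by positivity), div_le_div_iff_of_pos_right (by positivity)]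
  have hqn : q ≤ N / 2 := hqa.trans hαN
  have e0 : α * N ≤ N / 2 * N := mul_le_mul_of_nonneg_right hαN hN.le
  have e0' : q * N ≤ N / 2 * N := mul_le_mul_of_nonneg_right hqn hN.le
  have e1 : α ^ 2 * q = α * N := by rw [← h]; ring
  have e2 : α * q ^ 2 = q * N := by rw [← h]; ring
  have e3 : q * q ≤ q * α := mul_le_mul_of_nonneg_left hqa hq.le
  have e4 : q ^ 3 ≤ q * N := by
    have := mul_le_mul_of_nonneg_left e3 hq.le
    rw [h] at this
    linarith [this, (by ring : q ^ 3 = q * (q * q))]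
  have e5 : 4 * (α + q) ^ 3
      = 4 * α ^ 3 + 12 * (α ^ 2 * q) + 12 * (α * q ^ 2) + 4 * q ^ 3 := by ring
  rw [e5, e1, e2]
  linarith [(by ring : N / 2 * N = N ^ 2 / 2)]

/-- Tail lower bound for the binomial distribution: if `X ~ Bin(n, 1/2)` and `α ≥ √n` with
`α + n/α ≤ n/2`, then
`Pr[X ≥ n/2 + α] ≥ (1/(1.5·e^(169/6)·√(2π)))·(√n/α)·exp(−2α²/n − 4α³/n²)`. -/
theorem binomial_tail_lower {Ω : Type*} [MeasurableSpace Ω] (μ : Measure Ω)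
    [IsProbabilityMeasure μ] (n : ℕ) (hn : 1 ≤ n)
    (X : Ω → ℕ) (hXmeas : Measurable X)
    (hbin : ∀ j : ℕ, μ {ω | X ω = j} = (n.choose j : ENNReal) / 2 ^ n)
    (α : ℝ) (hα1 : Real.sqrt n ≤ α) (hα2 : α + n / α ≤ (n : ℝ) / 2) :
    ENNReal.ofReal
        (1 / (1.5 * Real.exp (169 / 6) * Real.sqrt (2 * Real.pi)) * (Real.sqrt n / α) *
          Real.exp (-2 * α ^ 2 / n - 4 * α ^ 3 / (n : ℝ) ^ 2))
      ≤ μ {ω | (n : ℝ) / 2 + α ≤ (X ω : ℝ)} := by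
  have hn0 : (0 : ℝ) < n := by exact_mod_cast hn
  have hs0 : 0 < Real.sqrt n := Real.sqrt_pos.2 hn0
  have hα0 : 0 < α := hs0.trans_le hα1
  have hsq : (n : ℝ) ≤ α ^ 2 := by
    have := Real.sq_sqrt hn0.le
    nlinarith
  have hα3 : 2 ≤ α := by
    have h : (n : ℝ) / α ≤ n / 2 := by linarith
    rw [div_le_div_iff₀ hα0 (by norm_num)] at h
    nlinarith
  have hαn : α ≤ n / 2 := by
    have : 0 < (n : ℝ) / α := by positivity
    linarith
  set q : ℝ := (n : ℝ) / α with hq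
  have hqα : q * α = n := by rw [hq]; field_simp
  have hq1 : 1 ≤ q := by rw [hq, le_div_iff₀ hα0]; linarith
  set m := ⌈(n : ℝ) / 2 + α⌉₊ with hm
  set r := ⌊q⌋₊ with hr
  have hm1 : (n : ℝ) / 2 + α ≤ m := Nat.le_ceil _
  have hm2 : (m : ℝ) < (n : ℝ) / 2 + α + 1 := Nat.ceil_lt_add_one (by positivity)
  have hr1 : (r : ℝ) ≤ q := Nat.floor_le (by linarith)
  have hr2 : q < r + 1 := Nat.lt_floor_add_one q
  have hr3 : (1 : ℝ) ≤ r := by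
    have : 1 ≤ r := Nat.le_floor (by simpa using hq1)
    exact_mod_cast this
  set J := Finset.Ico m (m + r) with hJ
  set L : ℝ := Real.exp (-2 - Real.log n / 2 - 2 * (α + q) ^ 2 / n - 4 * (α + q) ^ 3 / (n : ℝ) ^ 2)
    with hL
  have hpt : ∀ j ∈ J, L ≤ (n.choose j : ℝ) / 2 ^ n := by
    intro j hj
    rw [hJ, Finset.mem_Ico] at hj
    have j1 : (m : ℝ) ≤ j := by exact_mod_cast hj.1
    have j2 : (j : ℝ) + 1 ≤ m + r := by exact_mod_cast hj.2
    have j3 : (j : ℝ) ≤ n := by linarith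
    exact aux_point hn (by exact_mod_cast j3) (by linarith) (by linarith)
  have hsub : X ⁻¹' (J : Set ℕ) ⊆ {ω | (n : ℝ) / 2 + α ≤ (X ω : ℝ)} := by
    intro ω hω
    have hω' : X ω ∈ J := hω
    rw [hJ, Finset.mem_Ico] at hω'
    have j1 : (m : ℝ) ≤ X ω := by exact_mod_cast hω'.1
    exact hm1.trans j1
  refine le_trans ?_ (measure_mono hsub)
  rw [← sum_measure_preimage_singleton J (fun y _ => hXmeas (measurableSet_singleton y))]
  have hterm : ∀ j ∈ J, ENNReal.ofReal L ≤ μ (X ⁻¹' {j}) := by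
    intro j hj
    have : μ (X ⁻¹' {j}) = ENNReal.ofReal ((n.choose j : ℝ) / 2 ^ n) := by
      rw [ENNReal.ofReal_div_of_pos (by positivity), ENNReal.ofReal_natCast,
        ENNReal.ofReal_pow (by norm_num)]
      have h := hbin j
      simp only [ENNReal.ofReal_ofNat]
      exact h
    rw [this]
    exact ENNReal.ofReal_le_ofReal (hpt j hj)
  refine le_trans ?_ (Finset.card_nsmul_le_sum J _ _ hterm)
  rw [nsmul_eq_mul, hJ, Nat.card_Ico, Nat.add_sub_cancel_left, ← ENNReal.ofReal_natCast,
    ← ENNReal.ofReal_mul (by positivity)]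
  apply ENNReal.ofReal_le_ofReal
  -- the exponent loses at most 22
  have hqa : q ≤ α := by
    rw [hq, div_le_iff₀ hα0, ← sq]
    exact hsq
  have t1 := aux_t1 hn0 hα0 (by linarith) hqa hqα
  have t2 := aux_t2 hn0 (by linarith) hα3 hαn hqa hqα
  have hL2 : Real.exp (-22) * (1 / Real.sqrt n) *
      Real.exp (-2 * α ^ 2 / n - 4 * α ^ 3 / (n : ℝ) ^ 2) ≤ L := by
    have : 1 / Real.sqrt n = Real.exp (-(Real.log n / 2)) := by
      rw [Real.exp_neg, ← Real.log_sqrt hn0.le, Real.exp_log hs0, one_div]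
    rw [this, ← Real.exp_add, ← Real.exp_add, hL]
    apply Real.exp_le_exp.2
    have : -2 * α ^ 2 / n = -(2 * α ^ 2 / n) := by ring
    linarith
  have hrq : q / 2 ≤ r := by linarith
  refine le_trans ?_ (mul_le_mul hrq hL2 (by positivity) (by positivity))
  have hqs : q / 2 * (Real.exp (-22) * (1 / Real.sqrt n) *
      Real.exp (-2 * α ^ 2 / n - 4 * α ^ 3 / (n : ℝ) ^ 2))
      = (Real.exp (-22) / 2) * (Real.sqrt n / α) *
      Real.exp (-2 * α ^ 2 / n - 4 * α ^ 3 / (n : ℝ) ^ 2) := by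
    have : q * (1 / Real.sqrt n) = Real.sqrt n / α := by
      rw [hq]
      field_simp
      exact (Real.sq_sqrt hn0.le).symm
    rw [← this]; ring
  rw [hqs]
  refine mul_le_mul_of_nonneg_right (mul_le_mul_of_nonneg_right ?_ (by positivity))
    (Real.exp_pos _).le
  rw [Real.exp_neg, ← one_div, div_div]
  apply one_div_le_one_div_of_le (by positivity)
  have u1 : (2 : ℝ) ≤ Real.sqrt (2 * Real.pi) := by
    apply Real.le_sqrt_of_sq_le
    nlinarith [Real.pi_gt_three]
  have u2 : Real.exp 22 ≤ Real.exp (169 / 6) := Real.exp_le_exp.2 (by norm_num)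
  have u3 := Real.exp_pos 22
  calc Real.exp 22 * 2 ≤ Real.exp (169 / 6) * Real.sqrt (2 * Real.pi) := by gcongr
    _ ≤ _ := by
      have : 0 ≤ Real.exp (169 / 6) * Real.sqrt (2 * Real.pi) := by positivity
      nlinarith
end

section
/- Let m, d ∈ ℕ with m, d ≥ 2 and ⌊m/d⌋ ≥ e^6, and let N = m^d. Let P be a jittered sampling point set of N points in [0,1)^d. Then E[D*(P)] ≥ (2e)^(−1/2) · d · m^((d−1)/2) · √( ln(⌊m/d⌋) − ln ln(⌊m/d⌋) ) · ( 1 + √( 2 ln(⌊m/d⌋) / (m − ⌊m/d⌋)^(d−1) ) )^(−1/2) · ( 1 − exp( − √(ln ⌊m/d⌋) / (1.5 · e^(169/6) · √π) ) ). -/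
open MeasureTheory ProbabilityTheory Real

noncomputable section

/-- The axis-aligned cube `∏_i [x_i/m, x_i/m + 1/m)` of the `m`-grid partition of `[0,1)^d`. -/
def jitterCube (m d : ℕ) (x : Fin d → Fin m) : Set (Fin d → ℝ) :=
  Set.univ.pi fun i => Set.Ico ((x i : ℝ) / m) ((x i : ℝ) / m + 1 / m)

/-- The distribution of a jittered sampling point configuration: independently, one point
uniformly distributed in each of the `m^d` cubes. -/
def jitterMeasure (m d : ℕ) : Measure ((Fin d → Fin m) → (Fin d → ℝ)) :=
  Measure.pi fun x => ((m : ENNReal) ^ d) • volume.restrict (jitterCube m d x)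

open scoped Classical in
/-- Signed (non-normalized) discrepancy `|P ∩ A| - N·λ(A)` with `N = m^d` of a point
configuration `P`. -/
def jdisc (m d : ℕ) (P : (Fin d → Fin m) → (Fin d → ℝ)) (A : Set (Fin d → ℝ)) : ℝ :=
  ((Finset.univ.filter fun x => P x ∈ A).card : ℝ) - (m : ℝ) ^ d * (volume A).toReal

/-- The anchored box `[0,y) = ∏_i [0, y_i)`. -/
def anchoredBox (d : ℕ) (y : Fin d → ℝ) : Set (Fin d → ℝ) :=
  Set.univ.pi fun i => Set.Ico 0 (y i)

/-- The (non-normalized) star discrepancy `D*(P) = sup_{y ∈ [0,1)^d} |disc([0,y))|`. -/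
def starDisc (m d : ℕ) (P : (Fin d → Fin m) → (Fin d → ℝ)) : ℝ :=
  ⨆ y : {y : Fin d → ℝ // ∀ i, y i ∈ Set.Ico (0 : ℝ) 1}, |jdisc m d P (anchoredBox d y.1)|

/-- The expected star discrepancy of a jittered sampling point set of `m^d` points. -/
def expStarDisc (m d : ℕ) : ℝ :=
  ∫ P, starDisc m d P ∂(jitterMeasure m d)

/-! independence -/
section indep
variable {ι : Type*} [Fintype ι] {E : Type*} [MeasurableSpace E] [Inhabited E]
  {μ : ι → Measure E} [∀ i, IsProbabilityMeasure (μ i)]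

open scoped Classical in
lemma jl_indep {β γ : Type*} [MeasurableSpace β] [MeasurableSpace γ]
    {f : (ι → E) → β} {g : (ι → E) → γ} (hf : Measurable f) (hg : Measurable g)
    {S T : Finset ι} (hST : Disjoint S T) (hfS : DependsOn f (S : Set ι))
    (hgT : DependsOn g (T : Set ι)) : IndepFun f g (Measure.pi μ) := by
  have h0 : iIndepFun (fun i (ω : ι → E) => ω i) (Measure.pi μ) :=
    iIndepFun_pi (X := fun i (x : E) => x) (fun i => aemeasurable_id)
  have h1 := h0.indepFun_finset S T hST (fun i => measurable_pi_apply i)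
  let ext (A : Finset ι) (q : A → E) : ι → E := fun i => if h : i ∈ A then q ⟨i, h⟩ else default
  have hext : ∀ A, Measurable (ext A) := by
    intro A
    rw [measurable_pi_iff]
    intro i
    by_cases h : i ∈ A
    · simp only [ext, h, dif_pos]; exact measurable_pi_apply _
    · simp only [ext, h, dif_neg, not_false_eq_true]; exact measurable_const
  have h2 := h1.comp (hf.comp (hext S)) (hg.comp (hext T))
  convert h2 using 1
  · funext P
    apply hfS
    intro i hi
    have : i ∈ S := hi
    simp [ext, this]
  · funext P
    apply hgT
    intro i hi
    have : i ∈ T := hi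
    simp [ext, this]

open scoped Classical in
lemma jl_mean_zero {V : Type*} [Fintype V] [MeasurableSpace V] [MeasurableSingletonClass V]
    {v : (ι → E) → V} (hv : Measurable v) {S : Finset ι} (hvS : DependsOn v (S : Set ι))
    {x : ι} (hx : x ∉ S) (g : V → E → ℝ) (hg : ∀ w, Measurable (g w)) (hb : ∀ w p, |g w p| ≤ 1)
    (h0 : ∀ w, ∫ p, g w p ∂(μ x) = 0) :
    ∫ P, g (v P) (P x) ∂(Measure.pi μ) = 0 := by
  have e : ∀ P, g (v P) (P x) = ∑ w, (if v P = w then (1:ℝ) else 0) * g w (P x) := by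
    intro P; simp
  simp_rw [e]
  have hm1 : ∀ w, Measurable (fun P : ι → E => if v P = w then (1:ℝ) else 0) := fun w =>
    Measurable.ite (hv (measurableSet_singleton w)) measurable_const measurable_const
  have hm2 : ∀ w, Measurable (fun P : ι → E => g w (P x)) := fun w =>
    (hg w).comp (measurable_pi_apply x)
  rw [integral_finsetSum]
  · apply Finset.sum_eq_zero
    intro w _
    have hi : IndepFun (fun P : ι → E => if v P = w then (1:ℝ) else 0) (fun P : ι → E => g w (P x))
        (Measure.pi μ) := by
      apply jl_indep (hm1 w) (hm2 w) (S := S) (T := {x}) (by simpa using hx)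
      · intro P P' h; simp only [hvS h]
      · intro P P' h; simp only [h x (by simp)]
    rw [hi.integral_fun_mul_eq_mul_integral (hm1 w).aestronglyMeasurable (hm2 w).aestronglyMeasurable]
    have : ∫ P, g w (P x) ∂(Measure.pi μ) = 0 := by
      rw [← h0 w]
      have := (measurePreserving_eval μ x).map_eq
      rw [← this, integral_map (measurable_pi_apply x).aemeasurable (hg w).aestronglyMeasurable]
    rw [this, mul_zero]
  · intro w _
    apply Integrable.of_bound ((hm1 w).mul (hm2 w)).aestronglyMeasurable 1
    filter_upwards with P
    simp only [Pi.mul_apply]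
    rw [Real.norm_eq_abs, abs_mul]
    have := hb w (P x)
    split_ifs <;> simp [this]

open scoped Classical in
lemma jl_prod {κ : Type*} (K : Finset κ) (S : κ → Finset ι)
    (hS : ∀ a ∈ K, ∀ b ∈ K, a ≠ b → Disjoint (S a) (S b))
    (F : κ → Set (ι → E)) (hF : ∀ a ∈ K, MeasurableSet (F a))
    (hd : ∀ a ∈ K, DependsOn (fun P => P ∈ F a) (S a : Set ι)) :
    (Measure.pi μ).real (⋂ a ∈ K, F a) = ∏ a ∈ K, (Measure.pi μ).real (F a) := by
  induction K using Finset.induction_on with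
  | empty => simp
  | insert a K ha ih =>
    rw [Finset.prod_insert ha, ← ih (fun x hx y hy => hS x (by simp [hx]) y (by simp [hy]))
      (fun x hx => hF x (by simp [hx])) (fun x hx => hd x (by simp [hx])),
      Finset.set_biInter_insert]
    have hmK : MeasurableSet (⋂ b ∈ K, F b) :=
      Finset.measurableSet_biInter K (fun b hb => hF b (by simp [hb]))
    have hma : MeasurableSet (F a) := hF a (by simp)
    have hi : IndepFun (fun P : ι → E => P ∈ F a) (fun P => P ∈ ⋂ b ∈ K, F b) (Measure.pi μ) := by
      apply jl_indep (measurable_mem.2 hma) (measurable_mem.2 hmK) (S := S a) (T := K.biUnion S)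
      · rw [Finset.disjoint_biUnion_right]
        intro b hb
        exact hS a (by simp) b (by simp [hb]) (by rintro rfl; exact ha hb)
      · exact hd a (by simp)
      · intro P P' h
        simp only [Set.mem_iInter, eq_iff_iff]
        refine forall₂_congr fun b hb => ?_
        have := hd b (by simp [hb]) (x := P) (y := P') (fun i hi => h i (by
          simp only [Finset.coe_biUnion, Set.mem_iUnion]; exact ⟨b, hb, hi⟩))
        simpa using this
    have := hi.measure_inter_preimage_eq_mul {True} {True} (by trivial) (by trivial)
    have e1 : (fun P : ι → E => P ∈ F a) ⁻¹' {True} = F a := by ext; simp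
    have e2 : (fun P : ι → E => P ∈ ⋂ b ∈ K, F b) ⁻¹' {True} = ⋂ b ∈ K, F b := by ext; simp
    rw [e1, e2] at this
    simp only [Measure.real, this, ENNReal.toReal_mul]
end indep

/-! geometry -/

def cubeMeasure (m d : ℕ) (x : Fin d → Fin m) : Measure (Fin d → ℝ) :=
  ((m : ENNReal) ^ d) • volume.restrict (jitterCube m d x)

lemma jitterMeasure_eq (m d : ℕ) : jitterMeasure m d = Measure.pi (cubeMeasure m d) := rfl

lemma jl_meas_cube (m d : ℕ) (x : Fin d → Fin m) : MeasurableSet (jitterCube m d x) :=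
  MeasurableSet.univ_pi fun _ => measurableSet_Ico

lemma jl_meas_box (d : ℕ) (y : Fin d → ℝ) : MeasurableSet (anchoredBox d y) :=
  MeasurableSet.univ_pi fun _ => measurableSet_Ico

lemma jl_cube_sub (m d : ℕ) (hm : 0 < m) (x : Fin d → Fin m) (b : Fin d → ℝ)
    (hb : ∀ i, 0 ≤ b i) (hb1 : ∀ i, b i ≤ 1) :
    (cubeMeasure m d x).real
      (Set.univ.pi fun i => Set.Ico ((x i : ℝ) / m) ((x i : ℝ) / m + b i / m)) = ∏ i, b i := by
  have hm' : (0:ℝ) < m := by exact_mod_cast hm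
  have hsub : (Set.univ.pi fun i => Set.Ico ((x i : ℝ) / m) ((x i : ℝ) / m + b i / m)) ⊆
      jitterCube m d x := by
    apply Set.pi_mono
    intro i _
    apply Set.Ico_subset_Ico_right
    have := hb1 i
    gcongr
  rw [cubeMeasure, Measure.real, Measure.smul_apply, Measure.restrict_apply
    (MeasurableSet.univ_pi fun _ => measurableSet_Ico), Set.inter_eq_left.2 hsub, smul_eq_mul,
    ENNReal.toReal_mul, Real.volume_pi_Ico_toReal]
  · simp only [add_sub_cancel_left]
    rw [Finset.prod_div_distrib]
    simp only [ENNReal.toReal_pow, ENNReal.toReal_natCast, Finset.prod_const, Finset.card_univ,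
      Fintype.card_fin]
    field_simp
  · intro i
    have := hb i
    simp only [le_add_iff_nonneg_right]
    positivity

lemma jl_cube_full (m d : ℕ) (hm : 0 < m) (x : Fin d → Fin m) :
    (cubeMeasure m d x).real (jitterCube m d x) = 1 := by
  have := jl_cube_sub m d hm x (fun _ => 1) (by simp) (by simp)
  simpa [jitterCube] using this

lemma jl_prob (m d : ℕ) (hm : 0 < m) (x : Fin d → Fin m) :
    IsProbabilityMeasure (cubeMeasure m d x) := by
  constructor
  have h := jl_cube_full m d hm x
  have e : cubeMeasure m d x Set.univ = cubeMeasure m d x (jitterCube m d x) := by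
    simp [cubeMeasure]
  rw [e]
  rw [Measure.real] at h
  rw [← ENNReal.toReal_eq_one_iff, h]

lemma jl_ae (m d : ℕ) (x : Fin d → Fin m) : ∀ᵐ p ∂(cubeMeasure m d x), p ∈ jitterCube m d x := by
  unfold cubeMeasure
  apply Measure.ae_smul_measure
  exact ae_restrict_mem (jl_meas_cube m d x)

/-- half-cube in direction `i` -/
def halfSet (m d : ℕ) (i : Fin d) (x : Fin d → Fin m) : Set (Fin d → ℝ) :=
  {p | p i < ((x i : ℝ) + 1/2) / m}

lemma jl_meas_half (m d : ℕ) (i : Fin d) (x : Fin d → Fin m) : MeasurableSet (halfSet m d i x) :=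
  measurableSet_lt (measurable_pi_apply i) measurable_const

lemma jl_half (m d : ℕ) (hm : 0 < m) (i : Fin d) (x : Fin d → Fin m) :
    (cubeMeasure m d x).real (halfSet m d i x) = 1/2 := by
  have hm' : (0:ℝ) < m := by exact_mod_cast hm
  have h := jl_cube_sub m d hm x (fun l => if l = i then 1/2 else 1)
    (by intro l; split_ifs <;> norm_num) (by intro l; split_ifs <;> norm_num)
  rw [Finset.prod_ite_eq' Finset.univ i (fun _ => (1/2:ℝ))] at h
  simp only [Finset.mem_univ, if_true] at h
  rw [← h]
  apply measureReal_congr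
  filter_upwards [jl_ae m d x] with p hp
  simp only [jitterCube, Set.mem_pi, Set.mem_univ, true_implies, Set.mem_Ico] at hp
  apply propext
  change p i < ((x i : ℝ) + 1/2) / m ↔ p ∈ Set.univ.pi _
  simp only [Set.mem_pi, Set.mem_univ, true_implies, Set.mem_Ico]
  constructor
  · intro hpi l
    refine ⟨(hp l).1, ?_⟩
    split_ifs with hl
    · subst hl; rw [add_div] at hpi; exact hpi
    · exact (hp l).2
  · intro hall
    have := (hall i).2
    simp only [if_true] at this
    rw [add_div]; exact this

lemma jl_cover (m d : ℕ) (hm : 0 < m) (p : Fin d → ℝ) (hp : ∀ i, p i ∈ Set.Ico (0:ℝ) 1) :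
    ∃ x, p ∈ jitterCube m d x := by
  have hm' : (0:ℝ) < m := by exact_mod_cast hm
  have hlt : ∀ i, ⌊p i * m⌋₊ < m := by
    intro i
    rw [Nat.floor_lt (mul_nonneg (hp i).1 hm'.le)]
    nlinarith [(hp i).2]
  refine ⟨fun i => ⟨⌊p i * m⌋₊, hlt i⟩, ?_⟩
  simp only [jitterCube, Set.mem_pi, Set.mem_univ, true_implies, Set.mem_Ico]
  intro i
  have h1 := Nat.floor_le (mul_nonneg (hp i).1 hm'.le)
  have h2 := Nat.lt_floor_add_one (p i * m)
  rw [← add_div, div_le_iff₀ hm', lt_div_iff₀ hm']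
  exact ⟨h1, h2⟩

lemma jl_disj (m d : ℕ) (hm : 0 < m) (x z : Fin d → Fin m) (hxz : x ≠ z) :
    Disjoint (jitterCube m d x) (jitterCube m d z) := by
  have hm' : (0:ℝ) < m := by exact_mod_cast hm
  rw [Set.disjoint_left]
  intro p hp hz
  apply hxz
  funext i
  simp only [jitterCube, Set.mem_pi, Set.mem_univ, true_implies, Set.mem_Ico] at hp hz
  have h1 := hp i
  have h2 := hz i
  rw [← add_div, div_le_iff₀ hm', lt_div_iff₀ hm'] at h1 h2
  have a : ((x i : ℕ):ℝ) < (z i : ℕ) + 1 := by linarith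
  have b : ((z i : ℕ):ℝ) < (x i : ℕ) + 1 := by linarith
  have a' : (x i : ℕ) < (z i : ℕ) + 1 := by exact_mod_cast a
  have b' : (z i : ℕ) < (x i : ℕ) + 1 := by exact_mod_cast b
  apply Fin.ext; omega

lemma jl_vol_sum (m d : ℕ) (hm : 0 < m) (y : Fin d → ℝ) (hy : ∀ i, y i ∈ Set.Ico (0:ℝ) 1) :
    (m:ℝ)^d * (volume (anchoredBox d y)).toReal = ∑ x, (cubeMeasure m d x).real (anchoredBox d y) := by
  have e : anchoredBox d y = ⋃ x ∈ (Finset.univ : Finset (Fin d → Fin m)), (anchoredBox d y ∩ jitterCube m d x) := by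
    ext p
    simp only [Finset.mem_univ, Set.iUnion_true, Set.mem_iUnion, Set.mem_inter_iff]
    constructor
    · intro hp
      obtain ⟨x, hx⟩ := jl_cover m d hm p (by
        intro i
        simp only [anchoredBox, Set.mem_pi, Set.mem_univ, true_implies, Set.mem_Ico] at hp
        exact ⟨(hp i).1, (hp i).2.trans (hy i).2⟩)
      exact ⟨x, hp, hx⟩
    · rintro ⟨x, hp, _⟩; exact hp
  have hv : volume (anchoredBox d y) = ∑ x, volume (anchoredBox d y ∩ jitterCube m d x) := by
    conv_lhs => rw [e]
    rw [measure_biUnion_finset]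
    · intro x _ z _ hxz
      exact (jl_disj m d hm x z hxz).mono Set.inter_subset_right Set.inter_subset_right
    · intro x _
      exact (jl_meas_box d y).inter (jl_meas_cube m d x)
  have hfin : ∀ x : Fin d → Fin m, volume (anchoredBox d y ∩ jitterCube m d x) ≠ ⊤ := by
    intro x
    apply ne_top_of_le_ne_top _ (measure_mono Set.inter_subset_left)
    rw [anchoredBox, Real.volume_pi_Ico]
    exact ENNReal.prod_ne_top (fun i _ => ENNReal.ofReal_ne_top)
  rw [hv, ENNReal.toReal_sum (fun x _ => hfin x), Finset.mul_sum]
  apply Finset.sum_congr rfl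
  intro x _
  rw [cubeMeasure, Measure.real, Measure.smul_apply, Measure.restrict_apply (jl_meas_box d y),
    smul_eq_mul, ENNReal.toReal_mul]
  simp

/-- single-cube centred contribution -/
def contrib (m d : ℕ) (x : Fin d → Fin m) (A : Set (Fin d → ℝ)) (p : Fin d → ℝ) : ℝ :=
  A.indicator (fun _ => (1:ℝ)) p - (cubeMeasure m d x).real A

lemma jl_disc_eq (m d : ℕ) (hm : 0 < m) (P) (y : Fin d → ℝ) (hy : ∀ i, y i ∈ Set.Ico (0:ℝ) 1) :
    jdisc m d P (anchoredBox d y) = ∑ x, contrib m d x (anchoredBox d y) (P x) := by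
  classical
  unfold jdisc contrib
  rw [jl_vol_sum m d hm y hy, Finset.sum_sub_distrib]
  congr 1
  rw [Finset.card_filter]
  push_cast
  apply Finset.sum_congr rfl
  intro x _
  simp [Set.indicator_apply]

lemma jl_contrib_bound (m d : ℕ) (hm : 0 < m) (x) (A) (p) : |contrib m d x A p| ≤ 1 := by
  have := jl_prob m d hm x
  have h1 : (cubeMeasure m d x).real A ≤ 1 := measureReal_le_one
  have h0 : 0 ≤ (cubeMeasure m d x).real A := measureReal_nonneg
  unfold contrib
  rw [abs_le]
  by_cases hp : p ∈ A <;> simp [hp] <;> linarith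

lemma jl_contrib_meas (m d : ℕ) (x) (A) (hA : MeasurableSet A) : Measurable (contrib m d x A) :=
  (measurable_const.indicator hA).sub measurable_const

lemma jl_contrib_int (m d : ℕ) (hm : 0 < m) (x) (A) (hA : MeasurableSet A) :
    ∫ p, contrib m d x A p ∂(cubeMeasure m d x) = 0 := by
  have := jl_prob m d hm x
  unfold contrib
  rw [integral_sub, integral_indicator hA]
  · simp
  · exact (integrable_const _).indicator hA
  · exact integrable_const _

/-! the star discrepancy is measurable, bounded -/

lemma jl_disc_abs (m d : ℕ) (hm : 0 < m) (P) (y : Fin d → ℝ) (hy : ∀ i, y i ∈ Set.Ico (0:ℝ) 1) :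
    |jdisc m d P (anchoredBox d y)| ≤ (m:ℝ)^d := by
  rw [jl_disc_eq m d hm P y hy]
  calc _ ≤ ∑ x, |contrib m d x (anchoredBox d y) (P x)| := Finset.abs_sum_le_sum_abs _ _
    _ ≤ ∑ x : Fin d → Fin m, 1 := Finset.sum_le_sum fun x _ => jl_contrib_bound m d hm x _ _
    _ = _ := by simp

lemma jl_bdd (m d : ℕ) (hm : 0 < m) (P) :
    BddAbove (Set.range fun y : {y : Fin d → ℝ // ∀ i, y i ∈ Set.Ico (0 : ℝ) 1} =>
      |jdisc m d P (anchoredBox d y.1)|) := by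
  refine ⟨(m:ℝ)^d, ?_⟩
  rintro _ ⟨y, rfl⟩
  exact jl_disc_abs m d hm P y.1 y.2

lemma jl_star_ge (m d : ℕ) (hm : 0 < m) (P) (y : Fin d → ℝ) (hy : ∀ i, y i ∈ Set.Ico (0:ℝ) 1) :
    |jdisc m d P (anchoredBox d y)| ≤ starDisc m d P :=
  le_ciSup (jl_bdd m d hm P) (⟨y, hy⟩ : {y : Fin d → ℝ // ∀ i, y i ∈ Set.Ico (0 : ℝ) 1})

lemma jl_star_le (m d : ℕ) (hm : 0 < m) (P) : starDisc m d P ≤ (m:ℝ)^d := by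
  have : Nonempty {y : Fin d → ℝ // ∀ i, y i ∈ Set.Ico (0 : ℝ) 1} := ⟨⟨fun _ => 0, by simp⟩⟩
  exact ciSup_le fun y => jl_disc_abs m d hm P y.1 y.2

/-- lower rational approximation -/
def qapprox (y : ℝ) (n : ℕ) : ℚ := ((⌈y * (n+1)⌉₊ : ℚ) - 1) / (n+1)

lemma jl_qapprox (y : ℝ) (hy : 0 < y) (n : ℕ) :
    0 ≤ (qapprox y n : ℝ) ∧ (qapprox y n : ℝ) < y ∧ y - 1/(n+1) ≤ (qapprox y n : ℝ) := by
  have h1 : 1 ≤ ⌈y * (n+1)⌉₊ := Nat.one_le_ceil_iff.2 (by positivity)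
  have h1' : (1:ℝ) ≤ ⌈y * (n+1)⌉₊ := by exact_mod_cast h1
  have h2 := Nat.le_ceil (y * (n+1))
  have h3 : (⌈y * (n+1)⌉₊ : ℝ) < y * (n+1) + 1 := Nat.ceil_lt_add_one (by positivity)
  have hn : (0:ℝ) < n+1 := by positivity
  unfold qapprox
  push_cast
  refine ⟨div_nonneg (by linarith) hn.le, ?_, ?_⟩
  · rw [div_lt_iff₀ hn]; linarith
  · rw [le_div_iff₀ hn, sub_mul]; field_simp; linarith

lemma jl_qtendsto (y : ℝ) (hy : 0 < y) :
    Filter.Tendsto (fun n => (qapprox y n : ℝ)) Filter.atTop (nhds y) := by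
  refine tendsto_of_tendsto_of_tendsto_of_le_of_le (g := fun n : ℕ => y - 1/((n:ℝ)+1)) (h := fun _ => y) ?_
    tendsto_const_nhds (fun n => (jl_qapprox y hy n).2.2) (fun n => (jl_qapprox y hy n).2.1.le)
  have := (tendsto_one_div_add_atTop_nhds_zero_nat (𝕜 := ℝ)).const_sub y
  simpa using this

lemma jl_disc_tendsto (m d : ℕ) (P) (y : Fin d → ℝ) (hy : ∀ i, 0 < y i) :
    Filter.Tendsto (fun n => jdisc m d P (anchoredBox d (fun i => (qapprox (y i) n : ℝ))))
      Filter.atTop (nhds (jdisc m d P (anchoredBox d y))) := by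
  classical
  unfold jdisc
  apply Filter.Tendsto.sub
  · apply tendsto_const_nhds.congr'
    have hev : ∀ x : Fin d → Fin m, ∀ᶠ n in Filter.atTop,
        (P x ∈ anchoredBox d y ↔ P x ∈ anchoredBox d (fun i => (qapprox (y i) n : ℝ))) := by
      intro x
      by_cases hx : P x ∈ anchoredBox d y
      · have hx' := hx
        simp only [anchoredBox, Set.mem_pi, Set.mem_univ, true_implies, Set.mem_Ico] at hx'
        have : ∀ i, ∀ᶠ n in Filter.atTop, P x i < (qapprox (y i) n : ℝ) := fun i =>
          (jl_qtendsto (y i) (hy i)).eventually (lt_mem_nhds (hx' i).2)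
        filter_upwards [Filter.eventually_all.2 this] with n hn
        simp only [hx, true_iff]
        simp only [anchoredBox, Set.mem_pi, Set.mem_univ, true_implies, Set.mem_Ico]
        exact fun i => ⟨(hx' i).1, hn i⟩
      · filter_upwards with n
        simp only [hx, false_iff]
        intro h
        apply hx
        simp only [anchoredBox, Set.mem_pi, Set.mem_univ, true_implies, Set.mem_Ico] at h ⊢
        exact fun i => ⟨(h i).1, (h i).2.trans (jl_qapprox (y i) (hy i) n).2.1⟩
    filter_upwards [Filter.eventually_all.2 hev] with n hn
    congr 2
    ext x
    simp [hn x]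
  · apply Filter.Tendsto.const_mul
    have e : ∀ z : Fin d → ℝ, (∀ i, 0 ≤ z i) → (volume (anchoredBox d z)).toReal = ∏ i, z i := by
      intro z hz
      rw [anchoredBox, Real.volume_pi_Ico_toReal (a := fun _ => 0) (fun i => hz i)]
      simp
    rw [e y (fun i => (hy i).le)]
    simp_rw [fun n => e (fun i => (qapprox (y i) n : ℝ)) (fun i => (jl_qapprox (y i) (hy i) n).1)]
    exact tendsto_finsetProd _ fun i _ => jl_qtendsto (y i) (hy i)

lemma jl_star_eq (m d : ℕ) (hm : 0 < m) (P) : starDisc m d P =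
    ⨆ q : {q : Fin d → ℚ // ∀ i, (q i : ℝ) ∈ Set.Ico (0 : ℝ) 1},
      |jdisc m d P (anchoredBox d (fun i => (q.1 i : ℝ)))| := by
  have hne : Nonempty {y : Fin d → ℝ // ∀ i, y i ∈ Set.Ico (0 : ℝ) 1} := ⟨⟨fun _ => 0, by simp⟩⟩
  have hne' : Nonempty {q : Fin d → ℚ // ∀ i, (q i : ℝ) ∈ Set.Ico (0 : ℝ) 1} := ⟨⟨fun _ => 0, by simp⟩⟩
  have hb : BddAbove (Set.range fun q : {q : Fin d → ℚ // ∀ i, (q i : ℝ) ∈ Set.Ico (0 : ℝ) 1} =>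
      |jdisc m d P (anchoredBox d (fun i => (q.1 i : ℝ)))|) := by
    refine ⟨(m:ℝ)^d, ?_⟩
    rintro _ ⟨y, rfl⟩
    exact jl_disc_abs m d hm P _ y.2
  apply le_antisymm
  · apply ciSup_le
    rintro ⟨y, hy⟩
    by_cases h0 : ∀ i, 0 < y i
    · refine le_of_tendsto (jl_disc_tendsto m d P y h0).abs ?_
      filter_upwards with n
      exact le_ciSup hb ⟨fun i => qapprox (y i) n, fun i => ⟨(jl_qapprox (y i) (h0 i) n).1,
        (jl_qapprox (y i) (h0 i) n).2.1.trans (hy i).2⟩⟩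
    · push Not at h0
      obtain ⟨i, hi⟩ := h0
      have hemp : ∀ z : Fin d → ℝ, z i ≤ 0 → anchoredBox d z = ∅ := by
        intro z hz
        unfold anchoredBox
        apply Set.univ_pi_eq_empty (i := i)
        simp [hz]
      refine le_trans (le_of_eq ?_) (le_ciSup hb ⟨fun _ => 0, by simp⟩)
      simp only
      rw [hemp y hi, hemp _ (by simp)]
  · apply ciSup_le
    intro q
    exact jl_star_ge m d hm P _ q.2

lemma jl_disc_meas (m d : ℕ) (hm : 0 < m) (y : Fin d → ℝ) (hy : ∀ i, y i ∈ Set.Ico (0:ℝ) 1) :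
    Measurable (fun P => jdisc m d P (anchoredBox d y)) := by
  simp_rw [fun P => jl_disc_eq m d hm P y hy]
  exact Finset.measurable_sum _ fun x _ =>
    (jl_contrib_meas m d x _ (jl_meas_box d y)).comp (measurable_pi_apply x)

lemma jl_star_meas (m d : ℕ) (hm : 0 < m) : Measurable (starDisc m d) := by
  have : starDisc m d = fun P => ⨆ q : {q : Fin d → ℚ // ∀ i, (q i : ℝ) ∈ Set.Ico (0 : ℝ) 1},
      |jdisc m d P (anchoredBox d (fun i => (q.1 i : ℝ)))| := funext (jl_star_eq m d hm)
  rw [this]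
  exact Measurable.iSup fun q => (jl_disc_meas m d hm _ q.2).abs

lemma jl_star_integrable (m d : ℕ) (hm : 0 < m) : Integrable (starDisc m d) (jitterMeasure m d) := by
  have := jl_prob m d hm
  rw [jitterMeasure_eq]
  apply Integrable.of_bound (jl_star_meas m d hm).aestronglyMeasurable ((m:ℝ)^d)
  filter_upwards with P
  rw [Real.norm_eq_abs, abs_of_nonneg]
  · exact jl_star_le m d hm P
  · exact le_trans (abs_nonneg _) (jl_star_ge m d hm P (fun _ => 0) (by simp))

lemma jl_meas_comp {Ω E V : Type*} [MeasurableSpace Ω] [MeasurableSpace E] [Countable V]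
    [MeasurableSpace V] [MeasurableSingletonClass V] {v : Ω → V} (hv : Measurable v) {f : Ω → E}
    (hf : Measurable f) (g : V → E → ℝ) (hg : ∀ w, Measurable (g w)) :
    Measurable (fun P => g (v P) (f P)) := by
  have h1 : Measurable (fun a : V × E => g a.1 a.2) :=
    measurable_from_prod_countable_right hg
  exact h1.comp (hv.prodMk hf)

/-! slabs -/

/-- inner slab in direction `i` at height `s` -/
def slab (m d r : ℕ) (i : Fin d) (s : Fin m) : Finset (Fin d → Fin m) :=
  Finset.univ.filter fun x => x i = s ∧ ∀ l, l ≠ i → (x l : ℕ) < r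

def topIdx (m r : ℕ) : Finset (Fin m) := Finset.univ.filter fun s => r ≤ (s : ℕ)

lemma jl_card_low (m r : ℕ) (hr : r ≤ m) :
    (Finset.univ.filter fun s : Fin m => (s:ℕ) < r).card = r := by
  rw [Fin.card_filter_val_lt]
  simp [hr]

lemma jl_card_top (m r : ℕ) (hr : r ≤ m) : (topIdx m r).card = m - r := by
  have h := Finset.card_filter_add_card_filter_not (s := (Finset.univ : Finset (Fin m)))
    (fun s : Fin m => (s:ℕ) < r)
  rw [jl_card_low m r hr] at h
  simp only [not_lt, Finset.card_univ, Fintype.card_fin] at h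
  unfold topIdx
  omega

lemma jl_card_slab (m d r : ℕ) (hr : r ≤ m) (i : Fin d) (s : Fin m) :
    (slab m d r i s).card = r^(d-1) := by
  have e : slab m d r i s = Fintype.piFinset (fun l => if l = i then {s} else
      Finset.univ.filter fun s : Fin m => (s:ℕ) < r) := by
    ext x
    simp only [slab, Finset.mem_filter, Finset.mem_univ, true_and, Fintype.mem_piFinset]
    constructor
    · rintro ⟨h1, h2⟩ l
      split_ifs with hl
      · subst hl; simpa using h1
      · simpa using h2 l hl
    · intro h
      refine ⟨by simpa using h i, fun l hl => by simpa [hl] using h l⟩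
  rw [e, Fintype.card_piFinset]
  have : ∀ l : Fin d, (if l = i then ({s} : Finset (Fin m)) else
      Finset.univ.filter fun s : Fin m => (s:ℕ) < r).card = if l = i then 1 else r := by
    intro l; split_ifs
    · simp
    · exact jl_card_low m r hr
  simp_rw [this]
  rw [Finset.prod_ite]
  simp [Finset.filter_ne']

def Zval (m d r : ℕ) (i : Fin d) (s : Fin m) (P : (Fin d → Fin m) → (Fin d → ℝ)) : ℝ :=
  ∑ x ∈ slab m d r i s, contrib m d x (halfSet m d i x) (P x)

lemma jl_Z_meas (m d r : ℕ) (i : Fin d) (s : Fin m) : Measurable (Zval m d r i s) :=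
  Finset.measurable_sum _ fun x _ =>
    (jl_contrib_meas m d x _ (jl_meas_half m d i x)).comp (measurable_pi_apply x)

lemma jl_Z_dep (m d r : ℕ) (i : Fin d) (s : Fin m) :
    DependsOn (Zval m d r i s) (slab m d r i s : Set (Fin d → Fin m)) := by
  intro P P' h
  unfold Zval
  exact Finset.sum_congr rfl fun x hx => by rw [h x hx]

open scoped Classical in
lemma jl_tail_measure (m d r : ℕ) (hm : 0 < m) (hr : r ≤ m) (i : Fin d) (s : Fin m) (t : ℝ) :
    ∑ j ∈ (Finset.range (r^(d-1)+1)).filter (fun j : ℕ => ((r^(d-1) : ℕ):ℝ)/2 + t ≤ j),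
        ((r^(d-1)).choose j : ℝ) / 2^(r^(d-1))
      ≤ (jitterMeasure m d).real {P | t ≤ Zval m d r i s P} := by
  have := jl_prob m d hm
  rw [jitterMeasure_eq]
  set n := r^(d-1) with hn
  set B := slab m d r i s with hB
  have hBn : B.card = n := jl_card_slab m d r hr i s
  let C (T : Finset (Fin d → Fin m)) (x : Fin d → Fin m) : Set (Fin d → ℝ) :=
    if x ∈ B then (if x ∈ T then halfSet m d i x else (halfSet m d i x)ᶜ) else Set.univ
  let Pat (T : Finset (Fin d → Fin m)) : Set ((Fin d → Fin m) → (Fin d → ℝ)) := Set.univ.pi (C T)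
  have hCm : ∀ T x, MeasurableSet (C T x) := by
    intro T x
    simp only [C]
    split_ifs
    · exact jl_meas_half m d i x
    · exact (jl_meas_half m d i x).compl
    · exact MeasurableSet.univ
  have hPm : ∀ T, MeasurableSet (Pat T) := fun T => MeasurableSet.univ_pi (hCm T)
  have hCv : ∀ T x, (cubeMeasure m d x).real (C T x) = if x ∈ B then 1/2 else 1 := by
    intro T x
    simp only [C]
    split_ifs
    · exact jl_half m d hm i x
    · rw [probReal_compl_eq_one_sub (jl_meas_half m d i x), jl_half m d hm i x]; norm_num
    · simp
  have hPv : ∀ T, (Measure.pi (cubeMeasure m d)).real (Pat T) = 1/2^n := by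
    intro T
    have : (Measure.pi (cubeMeasure m d)).real (Pat T) = ∏ x, (cubeMeasure m d x).real (C T x) := by
      simp only [Measure.real, Pat, Measure.pi_pi, ENNReal.toReal_prod]
    rw [this]
    simp_rw [hCv]
    rw [Finset.prod_ite]
    simp [hBn]
  have hPmem : ∀ T P, P ∈ Pat T → ∀ x ∈ B, (P x ∈ halfSet m d i x ↔ x ∈ T) := by
    intro T P hP x hx
    have := hP x (Set.mem_univ x)
    simp only [C, hx, if_true] at this
    by_cases hT : x ∈ T
    · simp only [hT, if_true] at this; simp [hT, this]
    · simp only [hT, if_false] at this; simpa [hT] using this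
  let G := B.powerset.filter (fun T => (n:ℝ)/2 + t ≤ (T.card : ℝ))
  have hsub : (⋃ T ∈ G, Pat T) ⊆ {P | t ≤ Zval m d r i s P} := by
    intro P hP
    simp only [Set.mem_iUnion] at hP
    obtain ⟨T, hT, hP⟩ := hP
    simp only [G, Finset.mem_filter, Finset.mem_powerset] at hT
    have hz : Zval m d r i s P = T.card - (n:ℝ)/2 := by
      unfold Zval contrib
      rw [Finset.sum_sub_distrib]
      simp_rw [jl_half m d hm i]
      congr 1
      · rw [← Finset.inter_eq_right.2 hT.1, ← Finset.filter_mem_eq_inter, Finset.card_filter]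
        push_cast
        apply Finset.sum_congr rfl
        intro x hx
        have := hPmem T P hP x hx
        simp [Set.indicator_apply, this]
      · rw [Finset.sum_const, ← hB, hBn]; simp; ring
    simp only [Set.mem_ofPred_eq, hz]
    linarith [hT.2]
  have hdisj : (G : Set (Finset (Fin d → Fin m))).PairwiseDisjoint Pat := by
    intro T hT T' hT' hne
    simp only [G, Finset.coe_filter, Finset.mem_powerset, Set.mem_ofPred_eq] at hT hT'
    rw [Function.onFun, Set.disjoint_left]
    intro P hP hP'
    apply hne
    ext x
    by_cases hx : x ∈ B
    · rw [← hPmem T P hP x hx, ← hPmem T' P hP' x hx]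
    · exact ⟨fun h => absurd (hT.1 h) hx, fun h => absurd (hT'.1 h) hx⟩
  refine le_trans (le_of_eq ?_) (measureReal_mono hsub)
  rw [measureReal_biUnion_finset hdisj (fun T _ => hPm T)]
  simp_rw [hPv]
  rw [Finset.sum_filter, Finset.sum_filter]
  have := Finset.sum_powerset_apply_card (fun j : ℕ => if (n:ℝ)/2 + t ≤ (j:ℝ) then (1:ℝ)/2^n else 0) (x := B)
  rw [this, hBn]
  apply Finset.sum_congr rfl
  intro j _
  split_ifs
  · simp; ring
  · simp

lemma jl_slab_disj (m d r : ℕ) (i i' : Fin d) (s s' : Fin m) (hs : s ∈ topIdx m r)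
    (hne : (i, s) ≠ (i', s')) : Disjoint (slab m d r i s) (slab m d r i' s') := by
  rw [Finset.disjoint_left]
  intro x hx hx'
  simp only [slab, topIdx, Finset.mem_filter, Finset.mem_univ, true_and] at hx hx' hs
  apply hne
  have hi : i = i' := by
    by_contra h
    have := hx'.2 i h
    rw [hx.1] at this
    omega
  subst hi
  rw [← hx.1, ← hx'.1]

lemma jl_hit (m d r : ℕ) (hm : 0 < m) (hr : r ≤ m) (i : Fin d) (t p : ℝ)
    (hp : p ≤ ∑ j ∈ (Finset.range (r^(d-1)+1)).filter (fun j : ℕ => ((r^(d-1) : ℕ):ℝ)/2 + t ≤ j),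
        ((r^(d-1)).choose j : ℝ) / 2^(r^(d-1))) :
    1 - (1-p)^(m-r) ≤ (jitterMeasure m d).real {P | ∃ s ∈ topIdx m r, t ≤ Zval m d r i s P} := by
  have := jl_prob m d hm
  have hpi : IsProbabilityMeasure (jitterMeasure m d) := by rw [jitterMeasure_eq]; infer_instance
  have e : {P | ∃ s ∈ topIdx m r, t ≤ Zval m d r i s P} = (⋂ s ∈ topIdx m r, {P | t ≤ Zval m d r i s P}ᶜ)ᶜ := by
    ext P; simp
  have hms : ∀ s, MeasurableSet {P | t ≤ Zval m d r i s P} := fun s =>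
    measurableSet_le measurable_const (jl_Z_meas m d r i s)
  rw [e, probReal_compl_eq_one_sub (Finset.measurableSet_biInter _ fun s _ => (hms s).compl)]
  apply sub_le_sub_left
  rw [jitterMeasure_eq, jl_prod (μ := cubeMeasure m d) (topIdx m r) (fun s => slab m d r i s)]
  · rw [← jl_card_top m r hr, ← Finset.prod_const]
    apply Finset.prod_le_prod
    · intros; positivity
    · intro s _
      rw [probReal_compl_eq_one_sub (hms s), ← jitterMeasure_eq]
      linarith [jl_tail_measure m d r hm hr i s t]
  · intro s hs s' _ hne
    exact jl_slab_disj m d r i i s s' hs (by simpa using hne)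
  · intro s _; exact (hms s).compl
  · intro s _ P P' h
    simp only [Set.mem_compl_iff, Set.mem_ofPred_eq, jl_Z_dep m d r i s h]

open scoped Classical in
/-- chosen height in each direction -/
def choiceIdx (m d r : ℕ) (w : Fin d → Fin m → Bool) (i : Fin d) : Option (Fin m) :=
  if h : ∃ s ∈ topIdx m r, w i s = true then some h.choose else none

/-- chosen box corner -/
def corner (m d r : ℕ) (w : Fin d → Fin m → Bool) (i : Fin d) : ℝ :=
  match choiceIdx m d r w i with
  | none => (r:ℝ) / m
  | some s => ((s:ℝ) + 1/2) / m

lemma jl_choice_mem (m d r : ℕ) (w : Fin d → Fin m → Bool) (i : Fin d) (s : Fin m)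
    (h : choiceIdx m d r w i = some s) : s ∈ topIdx m r ∧ w i s = true := by
  unfold choiceIdx at h
  split_ifs at h with hs
  have := hs.choose_spec
  simp only [Option.some.injEq] at h
  rw [h] at this
  exact this

lemma jl_corner_ge (m d r : ℕ) (w : Fin d → Fin m → Bool) (i : Fin d) :
    (r:ℝ)/m ≤ corner m d r w i := by
  unfold corner
  split
  · exact le_rfl
  · rename_i s h
    have := (jl_choice_mem m d r w i s h).1
    simp only [topIdx, Finset.mem_filter, Finset.mem_univ, true_and] at this
    have : (r:ℝ) ≤ s := by exact_mod_cast this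
    gcongr
    linarith

lemma jl_corner_mem (m d r : ℕ) (hr : r < m) (w : Fin d → Fin m → Bool) (i : Fin d) :
    corner m d r w i ∈ Set.Ico (0:ℝ) 1 := by
  have hm : (0:ℝ) < m := by exact_mod_cast (by omega : 0 < m)
  refine ⟨le_trans (by positivity) (jl_corner_ge m d r w i), ?_⟩
  unfold corner
  split
  · rw [div_lt_one hm]; exact_mod_cast hr
  · rename_i s h
    rw [div_lt_one hm]
    have : (s:ℕ) + 1 ≤ m := s.2
    have : ((s:ℕ):ℝ) + 1 ≤ m := by exact_mod_cast this
    linarith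

lemma jl_contrib_congr (m d : ℕ) (x : Fin d → Fin m) (A B : Set (Fin d → ℝ))
    (h : ∀ p ∈ jitterCube m d x, p ∈ A ↔ p ∈ B) (p) (hp : p ∈ jitterCube m d x) :
    contrib m d x A p = contrib m d x B p := by
  unfold contrib
  congr 1
  · by_cases hA : p ∈ A
    · rw [Set.indicator_of_mem hA, Set.indicator_of_mem ((h p hp).1 hA)]
    · rw [Set.indicator_of_notMem hA, Set.indicator_of_notMem (fun hB => hA ((h p hp).2 hB))]
  · apply measureReal_congr
    filter_upwards [jl_ae m d x] with q hq
    exact propext (h q hq)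

lemma jl_contrib_slab (m d r : ℕ) (hm : 0 < m) (w : Fin d → Fin m → Bool) (i : Fin d) (s : Fin m)
    (hs : s ∈ topIdx m r) (x : Fin d → Fin m) (hx : x ∈ slab m d r i s) (p : Fin d → ℝ)
    (hp : p ∈ jitterCube m d x) :
    contrib m d x (anchoredBox d (corner m d r w)) p =
      if choiceIdx m d r w i = some s then contrib m d x (halfSet m d i x) p else 0 := by
  have := jl_prob m d hm x
  have hm' : (0:ℝ) < m := by exact_mod_cast hm
  simp only [slab, topIdx, Finset.mem_filter, Finset.mem_univ, true_and] at hx hs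
  have hsr : (r:ℝ) ≤ (s:ℕ) := by exact_mod_cast hs
  have key : ∀ q ∈ jitterCube m d x, q ∈ anchoredBox d (corner m d r w) ↔ q i < corner m d r w i := by
    intro q hq
    simp only [jitterCube, anchoredBox, Set.mem_pi, Set.mem_univ, true_implies, Set.mem_Ico] at hq ⊢
    constructor
    · intro h; exact (h i).2
    · intro h l
      refine ⟨le_trans (by positivity) (hq l).1, ?_⟩
      by_cases hl : l = i
      · subst hl; exact h
      · refine lt_of_lt_of_le (hq l).2 (le_trans ?_ (jl_corner_ge m d r w l))
        rw [← add_div]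
        have : (x l : ℕ) + 1 ≤ r := hx.2 l hl
        have : ((x l : ℕ):ℝ) + 1 ≤ r := by exact_mod_cast this
        gcongr
  have bnd : ∀ q ∈ jitterCube m d x, (s:ℝ)/m ≤ q i ∧ q i < ((s:ℝ)+1)/m := by
    intro q hq
    simp only [jitterCube, Set.mem_pi, Set.mem_univ, true_implies, Set.mem_Ico] at hq
    have := hq i
    rw [hx.1, ← add_div] at this
    exact this
  have hempty : contrib m d x ∅ p = 0 := by simp [contrib]
  have huniv : contrib m d x Set.univ p = 0 := by simp [contrib]
  rcases hc : choiceIdx m d r w i with _ | s'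
  · simp only [reduceCtorEq, if_false]
    rw [← hempty]
    apply jl_contrib_congr m d x _ _ _ p hp
    intro q hq
    rw [key q hq]
    have hcor : corner m d r w i = r/m := by unfold corner; rw [hc]
    simp only [hcor, Set.mem_empty_iff_false, iff_false, not_lt]
    exact le_trans (by gcongr) (bnd q hq).1
  · have hcor : corner m d r w i = ((s':ℝ)+1/2)/m := by unfold corner; rw [hc]
    rcases lt_trichotomy s' s with h | h | h
    · rw [if_neg (by simp [h.ne]), ← hempty]
      apply jl_contrib_congr m d x _ _ _ p hp
      intro q hq
      rw [key q hq]
      simp only [hcor, Set.mem_empty_iff_false, iff_false, not_lt]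
      refine le_trans ?_ (bnd q hq).1
      have : (s':ℕ) + 1 ≤ s := h
      have : ((s':ℕ):ℝ) + 1 ≤ (s:ℕ) := by exact_mod_cast this
      gcongr; linarith
    · subst h
      rw [if_pos rfl]
      apply jl_contrib_congr m d x _ _ _ p hp
      intro q hq
      rw [key q hq, hcor]
      simp [halfSet, hx.1]
    · rw [if_neg (by simp [h.ne']), ← huniv]
      apply jl_contrib_congr m d x _ _ _ p hp
      intro q hq
      rw [key q hq]
      simp only [hcor, Set.mem_univ, iff_true]
      refine lt_of_lt_of_le (bnd q hq).2 ?_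
      have : (s:ℕ) + 1 ≤ s' := h
      have : ((s:ℕ):ℝ) + 1 ≤ (s':ℕ) := by exact_mod_cast this
      exact div_le_div_of_nonneg_right (by linarith) hm'.le

open scoped Classical in
def allSlabs (m d r : ℕ) : Finset (Fin d → Fin m) :=
  ((Finset.univ : Finset (Fin d)) ×ˢ topIdx m r).biUnion fun a => slab m d r a.1 a.2

/-- the observed pattern -/
def pat (m d r : ℕ) (t : ℝ) (P : (Fin d → Fin m) → (Fin d → ℝ)) : Fin d → Fin m → Bool :=
  open scoped Classical in fun i s => decide (s ∈ topIdx m r ∧ t ≤ Zval m d r i s P)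

lemma jl_pat_meas (m d r : ℕ) (t : ℝ) : Measurable (pat m d r t) := by
  rw [measurable_pi_iff]; intro i
  rw [measurable_pi_iff]; intro s
  unfold pat
  apply measurable_to_bool
  suffices h : MeasurableSet {P | s ∈ topIdx m r ∧ t ≤ Zval m d r i s P} by
    convert h using 1
    ext P; simp
  by_cases hs : s ∈ topIdx m r
  · simp only [hs, true_and]
    exact measurableSet_le measurable_const (jl_Z_meas m d r i s)
  · simp [hs]

lemma jl_pat_dep (m d r : ℕ) (t : ℝ) : DependsOn (pat m d r t) (allSlabs m d r : Set (Fin d → Fin m)) := by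
  classical
  intro P P' h
  funext i s
  unfold pat
  simp only [decide_eq_decide]
  by_cases hs : s ∈ topIdx m r
  · rw [jl_Z_dep m d r i s (x := P) (y := P')]
    intro x hx
    apply h
    simp only [allSlabs, Finset.coe_biUnion, Set.mem_iUnion]
    exact ⟨(i, s), by simpa using hs, hx⟩
  · simp [hs]

open scoped Classical in
lemma jl_main (m d r : ℕ) (hr : r < m) (t p : ℝ) (ht : 0 ≤ t)
    (hp : p ≤ ∑ j ∈ (Finset.range (r^(d-1)+1)).filter (fun j : ℕ => ((r^(d-1) : ℕ):ℝ)/2 + t ≤ j),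
        ((r^(d-1)).choose j : ℝ) / 2^(r^(d-1))) :
    d * t * (1 - (1-p)^(m-r)) ≤ expStarDisc m d := by
  have hm : 0 < m := by omega
  have := jl_prob m d hm
  have hpi : IsProbabilityMeasure (jitterMeasure m d) := by rw [jitterMeasure_eq]; infer_instance
  let g (x : Fin d → Fin m) (w : Fin d → Fin m → Bool) : (Fin d → ℝ) → ℝ :=
    contrib m d x (anchoredBox d (corner m d r w))
  let V := pat m d r t
  have hgm : ∀ x w, Measurable (g x w) := fun x w => jl_contrib_meas m d x _ (jl_meas_box d _)
  have hmeas : ∀ x, Measurable (fun P : (Fin d → Fin m) → (Fin d → ℝ) => g x (V P) (P x)) := by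
    intro x
    exact jl_meas_comp (jl_pat_meas m d r t) (measurable_pi_apply x) (g x) (hgm x)
  have hgint : ∀ x, Integrable (fun P : (Fin d → Fin m) → (Fin d → ℝ) => g x (V P) (P x))
      (jitterMeasure m d) := by
    intro x
    apply Integrable.of_bound (hmeas x).aestronglyMeasurable 1
    filter_upwards with P
    exact jl_contrib_bound m d hm x _ _
  have h1 : ∫ P, ∑ x, g x (V P) (P x) ∂(jitterMeasure m d) ≤ expStarDisc m d := by
    apply integral_mono (integrable_finsetSum _ fun x _ => hgint x) (jl_star_integrable m d hm)
    intro P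
    have hy := jl_corner_mem m d r hr (V P)
    have := jl_star_ge m d hm P _ hy
    rw [jl_disc_eq m d hm P _ hy] at this
    exact le_trans (le_abs_self _) this
  refine le_trans ?_ h1
  rw [integral_finsetSum _ fun x _ => hgint x]
  have h2 : ∑ x, ∫ P, g x (V P) (P x) ∂(jitterMeasure m d) =
      ∑ x ∈ allSlabs m d r, ∫ P, g x (V P) (P x) ∂(jitterMeasure m d) := by
    symm
    apply Finset.sum_subset (Finset.subset_univ _)
    intro x _ hx
    rw [jitterMeasure_eq]
    exact jl_mean_zero (jl_pat_meas m d r t) (jl_pat_dep m d r t) hx (g x) (hgm x)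
      (fun w p => jl_contrib_bound m d hm x _ _) (fun w => jl_contrib_int m d hm x _ (jl_meas_box d _))
  rw [h2, ← integral_finsetSum _ fun x _ => hgint x]
  let hit (i : Fin d) : Set ((Fin d → Fin m) → (Fin d → ℝ)) :=
    {P | ∃ s ∈ topIdx m r, t ≤ Zval m d r i s P}
  have hhit : ∀ i, MeasurableSet (hit i) := by
    intro i
    have : hit i = ⋃ s ∈ topIdx m r, {P | t ≤ Zval m d r i s P} := by ext P; simp [hit]
    rw [this]
    exact Finset.measurableSet_biUnion _ fun s _ => measurableSet_le measurable_const (jl_Z_meas m d r i s)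
  have hae : ∀ᵐ P ∂(jitterMeasure m d), ∀ x, P x ∈ jitterCube m d x := by
    rw [ae_all_iff]
    intro x
    rw [jitterMeasure_eq]
    exact (measurePreserving_eval (cubeMeasure m d) x).quasiMeasurePreserving.ae (jl_ae m d x)
  have h3 : ∫ P, ∑ i, (hit i).indicator (fun _ => t) P ∂(jitterMeasure m d) ≤
      ∫ P, ∑ x ∈ allSlabs m d r, g x (V P) (P x) ∂(jitterMeasure m d) := by
    apply integral_mono_ae (integrable_finsetSum _ fun i _ => (integrable_const _).indicator (hhit i))
      (integrable_finsetSum _ fun x _ => hgint x)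
    filter_upwards [hae] with P hP
    unfold allSlabs
    rw [Finset.sum_biUnion, Finset.sum_product]
    · apply Finset.sum_le_sum
      intro i _
      have e : ∀ s ∈ topIdx m r, ∑ x ∈ slab m d r i s, g x (V P) (P x) =
          if choiceIdx m d r (V P) i = some s then Zval m d r i s P else 0 := by
        intro s hs
        rw [Finset.sum_congr rfl fun x hx => jl_contrib_slab m d r hm (V P) i s hs x hx (P x) (hP x)]
        split_ifs
        · rfl
        · simp
      simp only
      rw [Finset.sum_congr rfl e]
      by_cases hh : P ∈ hit i
      · rw [Set.indicator_of_mem hh]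
        have hex : ∃ s ∈ topIdx m r, V P i s = true := by
          obtain ⟨s, hs, hz⟩ := hh
          exact ⟨s, hs, by simp [V, pat, hs, hz]⟩
        obtain ⟨s, hc⟩ : ∃ s, choiceIdx m d r (V P) i = some s := by
          unfold choiceIdx; rw [dif_pos hex]; exact ⟨_, rfl⟩
        have hsp := jl_choice_mem m d r (V P) i s hc
        rw [hc]
        simp only [Option.some.injEq]
        rw [Finset.sum_ite_eq, if_pos hsp.1]
        have := hsp.2
        simp only [V, pat, decide_eq_true_eq] at this
        exact this.2
      · rw [Set.indicator_of_notMem hh]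
        apply Finset.sum_nonneg
        intro s hs
        split_ifs with hc
        · have := (jl_choice_mem m d r (V P) i s hc).2
          simp only [V, pat, decide_eq_true_eq] at this
          exact ht.trans this.2
        · exact le_rfl
    · intro a ha b hb hab
      simp only [Finset.coe_product, Set.mem_prod, Finset.mem_coe] at ha
      exact jl_slab_disj m d r a.1 b.1 a.2 b.2 ha.2 hab
  refine le_trans ?_ h3
  rw [integral_finsetSum _ fun i _ => (integrable_const _).indicator (hhit i)]
  calc d * t * (1 - (1-p)^(m-r)) = ∑ i : Fin d, (1 - (1-p)^(m-r)) * t := by simp; ring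
    _ ≤ _ := by
      apply Finset.sum_le_sum
      intro i _
      rw [integral_indicator (hhit i)]
      simp only [integral_const, MeasurableSet.univ, measureReal_restrict_apply, Set.univ_inter, smul_eq_mul]
      exact mul_le_mul_of_nonneg_right (jl_hit m d r hm hr.le i t p hp) ht

lemma jl_sq {a b : ℝ} (h : a^2 ≤ b^2) (hb : 0 ≤ b) : a ≤ b := abs_le_of_sq_le_sq' h hb |>.2

lemma jl_sqrt_add (a b : ℝ) (ha : 0 ≤ a) (hb : 0 ≤ b) : √(a+b) ≤ √a + √b := by
  apply Real.sqrt_le_iff.2 ⟨by positivity, ?_⟩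
  nlinarith [Real.sq_sqrt ha, Real.sq_sqrt hb, Real.sqrt_nonneg a, Real.sqrt_nonneg b,
    mul_nonneg (Real.sqrt_nonneg a) (Real.sqrt_nonneg b)]

lemma jl_central (h : ℕ) (hh : 1 ≤ h) : (4:ℝ)^h ≤ 2 * √h * (h.centralBinom : ℝ) := by
  have key : (16:ℝ)^h ≤ 4 * h * (h.centralBinom : ℝ)^2 := by
    induction h, hh using Nat.le_induction with
    | base => norm_num [Nat.centralBinom, Nat.choose]
    | succ h hh ih =>
      have e : ((h:ℝ)+1) * ((h+1).centralBinom : ℝ) = 2 * (2*h+1) * (h.centralBinom:ℝ) := by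
        exact_mod_cast Nat.succ_mul_centralBinom_succ h
      have hp : (0:ℝ) < h := by exact_mod_cast hh
      have e2 : ((h+1).centralBinom : ℝ) = 2 * (2*h+1) * (h.centralBinom:ℝ) / (h+1) := by
        field_simp; linarith
      rw [e2, pow_succ]
      push_cast
      have : 4 * ((h:ℝ)+1) * (2 * (2*h+1) * (h.centralBinom:ℝ) / (h+1))^2
        = 4 * (2*h+1)^2/(h*(h+1)) * (4 * h * (h.centralBinom:ℝ)^2) := by field_simp; ring
      rw [this, mul_comm]
      apply mul_le_mul _ ih (by positivity) (by positivity)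
      rw [le_div_iff₀ (by positivity)]
      nlinarith
  apply jl_sq 
  · rw [← pow_mul, mul_comm h 2, pow_mul]
    calc ((4:ℝ)^2)^h = 16^h := by norm_num
      _ ≤ _ := key
      _ = _ := by rw [mul_pow, mul_pow, Real.sq_sqrt (by positivity)]; ring
  · positivity

lemma jl_ratio (h a : ℕ) (ha : a < h) :
    (h.centralBinom : ℝ) * exp (-((a:ℝ)^2/(h-a))) ≤ ((2*h).choose (h+a) : ℝ) := by
  induction a with
  | zero => simp [Nat.centralBinom]
  | succ a ih =>
    have ih := ih (by omega)
    have hr : ((a:ℝ)+1) < h := by exact_mod_cast ha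
    have ha0 : (0:ℝ) ≤ a := by positivity
    have e : ((2*h).choose (h+a+1) : ℝ) * (h+a+1) = ((2*h).choose (h+a) : ℝ) * (h-a) := by
      have := Nat.choose_succ_right_eq (2*h) (h+a)
      have h2 : 2*h-(h+a) = h-a := by omega
      rw [h2] at this
      have h3 : ((h-a:ℕ):ℝ) = h-a := by rw [Nat.cast_sub (by omega)]
      rw [← h3]; exact_mod_cast this
    have e2 : ((2*h).choose (h+(a+1)) : ℝ) = ((2*h).choose (h+a) : ℝ) * ((h-a)/(h+a+1)) := by
      rw [← add_assoc, mul_div_assoc', ← e]; field_simp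
    rw [e2]
    have hle : exp (-((2*a+1)/((h:ℝ)-a))) ≤ (h-a)/(h+a+1) := by
      rw [exp_neg, inv_le_comm₀ (exp_pos _) (div_pos (by linarith) (by linarith)), inv_div]
      have := add_one_le_exp ((2*a+1)/((h:ℝ)-a))
      refine le_trans (le_of_eq ?_) this
      have : (h:ℝ)-a ≠ 0 := by linarith
      field_simp; ring
    calc _ ≤ (h.centralBinom : ℝ) * (exp (-((a:ℝ)^2/(h-a))) * exp (-((2*a+1)/((h:ℝ)-a)))) := by
          rw [← exp_add]
          gcongr
          push_cast
          have h1 : ((a:ℝ)+1)^2/(h-a) ≤ ((a:ℝ)+1)^2/(h-(a+1)) := by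
            apply div_le_div_of_nonneg_left <;> nlinarith
          have : ((a:ℝ)+1)^2/(h-a) = (a:ℝ)^2/(h-a) + (2*a+1)/((h:ℝ)-a) := by ring
          linarith
      _ ≤ _ := by
          rw [← mul_assoc]
          apply mul_le_mul ih hle (exp_pos _).le (by positivity)

lemma jl_choose (n b : ℕ) : ((2*(n/2)).choose b : ℝ) / 2^(2*(n/2)) ≤ (n.choose b : ℝ) / 2^n ∨ b ≤ n/2 := by
  rcases Nat.even_or_odd' n with ⟨h, rfl | rfl⟩
  · left; simp
  · by_cases hb : b ≤ h
    · right; omega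
    · left
      have : (2*h+1)/2 = h := by omega
      rw [this, pow_succ, div_le_div_iff₀ (by positivity) (by positivity)]
      obtain ⟨c, rfl⟩ : ∃ c, b = c+1 := ⟨b-1, by omega⟩
      have h1 : (2*h).choose (c+1) ≤ (2*h).choose c := by
        have e := Nat.choose_succ_right_eq (2*h) c
        by_contra hc
        have : (2*h).choose c * (2*h-c) ≤ (2*h).choose c * (c+1) := Nat.mul_le_mul_left _ (by omega)
        have : (2*h).choose c * (c+1) < (2*h).choose (c+1) * (c+1) := by
          apply Nat.mul_lt_mul_of_pos_right (by omega) (by omega)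
        omega
      have h2 : ((2*h).choose (c+1) : ℝ) ≤ (2*h).choose c := by exact_mod_cast h1
      have h3 : ((2*h+1).choose (c+1) : ℝ) = (2*h).choose c + (2*h).choose (c+1) := by
        exact_mod_cast Nat.choose_succ_succ _ _
      rw [h3]
      nlinarith [show (0:ℝ) < 2^(2*h) by positivity]

/-- real-number estimate used for the tail -/
lemma jl_real (h L M a : ℝ) (hL : 6 ≤ L) (hh : L^3 ≤ 4*h) (hM0 : 0 ≤ M) (hM : M ≤ L - 1)
    (ha0 : 0 ≤ a) (ha : a ≤ √((h+1/2)*M) + √(h/L) + 5/2) :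
    a < h ∧ a^2/(h-a) ≤ M + 28 := by
  have hL0 : (0:ℝ) < L := by linarith
  have hh54 : 54 ≤ h := by nlinarith [mul_nonneg (sub_nonneg.2 hL) (sub_nonneg.2 hL), mul_nonneg (mul_nonneg (sub_nonneg.2 hL) (sub_nonneg.2 hL)) (sub_nonneg.2 hL)]
  have hh0 : 0 < h := by linarith
  have hL2 : 6*L^2 ≤ 4*h := by nlinarith [sq_nonneg L]
  have hLh : 9 * L ≤ h := by nlinarith [mul_nonneg (sub_nonneg.2 hL) hL0.le]
  -- a ≤ √(h M) + q, q = (5/2) √(h/L)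
  have h1 : √((h+1/2)*M) ≤ √(h*M) + √(M/2) := by
    rw [show (h+1/2)*M = h*M + M/2 by ring]
    exact jl_sqrt_add _ _ (by positivity) (by positivity)
  set q := √(h/L) with hq
  have hq0 : 0 ≤ q := Real.sqrt_nonneg _
  have hq2 : q^2 = h/L := Real.sq_sqrt (by positivity)
  have hqL : q^2 * L = h := by rw [hq2]; field_simp
  have h2 : √(M/2) ≤ 3/5 * q := by
    apply Real.sqrt_le_iff.2 ⟨by positivity, ?_⟩
    rw [mul_pow, hq2, mul_div_assoc', le_div_iff₀ hL0]
    nlinarith [mul_le_mul_of_nonneg_right hM hL0.le]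
  have h3 : (5/2:ℝ) ≤ 17/20 * q := by
    apply jl_sq _ (by positivity)
    rw [mul_pow, hq2, mul_div_assoc', le_div_iff₀ hL0]
    nlinarith
  set r := √(h*M) with hr
  have hr0 : 0 ≤ r := Real.sqrt_nonneg _
  have hr2 : r^2 = h*M := Real.sq_sqrt (by positivity)
  have h4 : a ≤ r + 5/2*q := by linarith
  have hrq : r * q ≤ h := by
    apply jl_sq _ hh0.le
    rw [mul_pow, hr2, hq2, mul_div_assoc', div_le_iff₀ hL0]
    nlinarith [mul_pos hh0 hh0]
  have hq6 : q^2 ≤ h/6 := by rw [hq2]; gcongr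
  have ha2 : a^2 ≤ h*(M+7) := by
    have : a^2 ≤ (r+5/2*q)^2 := by gcongr
    nlinarith
  have ha3 : a*(M+28) ≤ 21*h := by
    apply jl_sq _ (by positivity)
    rw [mul_pow]
    have e1 : (M+28)^2 ≤ (11/2*L)^2 := by gcongr; linarith
    have e2 : M+7 ≤ 2*L := by linarith
    calc a^2*(M+28)^2 ≤ (h*(M+7))*(M+28)^2 := by gcongr
      _ ≤ (h*(2*L))*(11/2*L)^2 := by gcongr
      _ = h*(121/2*L^3) := by ring
      _ ≤ h*(121/2*(4*h)) := by gcongr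
      _ ≤ _ := by nlinarith
  have ha4 : a < h := by nlinarith
  refine ⟨ha4, ?_⟩
  rw [div_le_iff₀ (by linarith)]
  nlinarith

set_option maxHeartbeats 1000000 in
lemma jl_tail (n : ℕ) (L : ℝ) (hL : 6 ≤ L) (hn : exp L ≤ n) :
    √L * exp (-L) / (1.5 * exp (169/6) * √π) ≤
      ∑ j ∈ (Finset.range (n+1)).filter (fun j : ℕ => (n:ℝ)/2 + √(n * (L - log L)/2) ≤ j),
        (n.choose j : ℝ) / 2^n := by
  set M := L - log L with hMdef
  have hL0 : (0:ℝ) < L := by linarith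
  have hlog1 : 1 ≤ log L := by
    rw [le_log_iff_exp_le hL0]; linarith [exp_one_lt_d9]
  have hM0 : 0 ≤ M := by have := log_le_sub_one_of_pos hL0; linarith
  have hM : M ≤ L - 1 := by linarith
  set h := n/2 with hh
  have hn1 : 2*h ≤ n := by omega
  have hn2 : n ≤ 2*h+1 := by omega
  have hn1' : 2*(h:ℝ) ≤ n := by exact_mod_cast hn1
  have hn2' : (n:ℝ) ≤ 2*h+1 := by exact_mod_cast hn2
  have hexp : L^3/6 + L^4/24 + L^5/120 ≤ exp L := by
    have := Real.sum_le_exp_of_nonneg hL0.le 6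
    simp [Finset.sum_range_succ, Nat.factorial] at this
    nlinarith [sq_nonneg L]
  have hL3 : L^3 ≤ 4*h := by
    have a1 : 6 * L^3 ≤ L^4 := by nlinarith [pow_pos hL0 3]
    have a2 : 36 * L^3 ≤ L^5 := by nlinarith [pow_pos hL0 3, pow_pos hL0 4]
    have a3 : 216 ≤ L^3 := by nlinarith [mul_nonneg (sub_nonneg.2 hL) (sub_nonneg.2 hL), mul_nonneg (mul_nonneg (sub_nonneg.2 hL) (sub_nonneg.2 hL)) (sub_nonneg.2 hL)]
    linarith
  have hh1 : 1 ≤ h := by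
    have a3 : 216 ≤ L^3 := by nlinarith [mul_nonneg (sub_nonneg.2 hL) (sub_nonneg.2 hL), mul_nonneg (mul_nonneg (sub_nonneg.2 hL) (sub_nonneg.2 hL)) (sub_nonneg.2 hL)]
    have : (1:ℝ) ≤ h := by linarith
    exact_mod_cast this
  have hh0 : (0:ℝ) < h := by exact_mod_cast hh1
  set t := √(n * M/2) with ht
  have ht0 : 0 ≤ t := Real.sqrt_nonneg _
  have ht' : t ≤ √((h+1/2)*M) := by
    apply Real.sqrt_le_sqrt; nlinarith
  set a0 := ⌈t + 1/2⌉₊ with ha0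
  set w := ⌈√(h/L)⌉₊ with hw
  have ha0l : t + 1/2 ≤ a0 := Nat.le_ceil _
  have ha0u : (a0:ℝ) < t + 1/2 + 1 := Nat.ceil_lt_add_one (by positivity)
  have hwl : √(h/L) ≤ w := Nat.le_ceil _
  have hwu : (w:ℝ) < √(h/L) + 1 := Nat.ceil_lt_add_one (by positivity)
  obtain ⟨hah, hae⟩ := jl_real h L M ((a0 + w : ℕ):ℝ) hL hL3 hM0 hM (by positivity)
    (by push_cast; linarith)
  have hah' : a0 + w < h := by exact_mod_cast hah
  have ha01 : 1 ≤ a0 := Nat.one_le_ceil_iff.2 (by positivity)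
  -- each term
  have hterm : ∀ i < w, 1/(2*√h) * exp (-(M+28)) ≤ (n.choose (h+(a0+i)) : ℝ)/2^n := by
    intro i hi
    have e1 := (jl_choose n (h+(a0+i))).resolve_right (by omega)
    refine le_trans ?_ e1
    rw [← hh, le_div_iff₀ (by positivity)]
    refine le_trans ?_ (jl_ratio h (a0+i) (by omega))
    have e2 := jl_central h hh1
    have e3 : exp (-(M+28)) ≤ exp (-(((a0+i:ℕ):ℝ)^2/(h-((a0+i:ℕ):ℝ)))) := by
      apply exp_le_exp.2
      apply neg_le_neg
      refine le_trans ?_ hae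
      have : ((a0+i:ℕ):ℝ) ≤ ((a0+w:ℕ):ℝ) := by exact_mod_cast (by omega)
      apply div_le_div₀ (by positivity) (by gcongr) (by linarith) (by linarith)
    have e4 : (1:ℝ)/(2*√h) * 2^(2*h) ≤ h.centralBinom := by
      rw [pow_mul, div_mul_eq_mul_div, one_mul, div_le_iff₀ (by positivity)]
      norm_num
      linarith
    calc _ = (1/(2*√h) * 2^(2*h)) * exp (-(M+28)) := by ring
      _ ≤ _ := mul_le_mul e4 e3 (exp_pos _).le (by positivity)
  have hsum : (w:ℝ) * (1/(2*√h) * exp (-(M+28))) ≤ ∑ j ∈ (Finset.range (n+1)).filter (fun j : ℕ => (n:ℝ)/2 + t ≤ j),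
        (n.choose j : ℝ) / 2^n := by
    calc _ = ∑ i ∈ Finset.range w, (1/(2*√h) * exp (-(M+28))) := by simp
      _ ≤ ∑ i ∈ Finset.range w, (n.choose (h+(a0+i)) : ℝ)/2^n :=
          Finset.sum_le_sum fun i hi => hterm i (Finset.mem_range.1 hi)
      _ = ∑ j ∈ (Finset.range w).image (fun i => h+(a0+i)), (n.choose j : ℝ)/2^n := by
          rw [Finset.sum_image]; intro x _ y _ hxy; simp at hxy; exact hxy
      _ ≤ _ := by
          apply Finset.sum_le_sum_of_subset_of_nonneg
          · intro j hj
            simp only [Finset.mem_image, Finset.mem_range, Finset.mem_filter] at hj ⊢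
            obtain ⟨i, hi, rfl⟩ := hj
            refine ⟨by omega, ?_⟩
            push_cast
            have : (0:ℝ) ≤ i := by positivity
            linarith
          · intros; positivity
  refine le_trans ?_ hsum
  have hpi : 17/10 ≤ √π := Real.le_sqrt_of_sq_le (by nlinarith [pi_gt_three])
  have hpi' : 1.5 * √π ≥ 2 := by norm_num; linarith
  have hexpM : exp (-(M+28)) = L * exp (-L) * exp (-28) := by
    rw [show -(M+28) = log L + (-L) + (-28) by rw [hMdef]; ring, exp_add, exp_add, exp_log hL0]
  have hsw : 1/√L ≤ w * (1/√h) := by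
    rw [mul_one_div, le_div_iff₀ (by positivity)]
    refine le_trans (le_of_eq ?_) hwl
    rw [Real.sqrt_div hh0.le]; ring
  have hc : 2 * exp 28 ≤ 1.5 * exp (169/6) * √π := by
    have : exp 28 ≤ exp (169/6) := exp_le_exp.2 (by norm_num)
    nlinarith [exp_pos 28]
  calc √L * exp (-L) / (1.5 * exp (169/6) * √π) ≤ √L * exp (-L) / (2 * exp 28) := by gcongr
    _ = (1/√L) * (1/2 * (L * exp (-L) * exp (-28))) := by
        rw [exp_neg 28]
        have : √L * √L = L := Real.mul_self_sqrt hL0.le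
        have h0 : √L ≠ 0 := (Real.sqrt_pos.2 hL0).ne'
        field_simp
        nlinarith
    _ ≤ (w * (1/√h)) * (1/2 * (L * exp (-L) * exp (-28))) := by gcongr
    _ = _ := by rw [hexpM]; ring

lemma jl_final (m d k : ℕ) (hd : 2 ≤ d) (hkd : k * d ≤ m) (hk : 1 ≤ k) (L c : ℝ) (hc : 0 ≤ c) :
    (2 * Real.exp 1) ^ (-(1 : ℝ) / 2) * d * (m : ℝ) ^ (((d : ℝ) - 1) / 2) *
        Real.sqrt (L - Real.log L) *
        (1 + Real.sqrt (2 * L / ((m : ℝ) - (k : ℝ)) ^ (d - 1))) ^ (-(1 : ℝ) / 2) * c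
      ≤ d * √((((m-k)^(d-1) : ℕ) : ℝ) * (L - log L)/2) * c := by
  refine mul_le_mul_of_nonneg_right ?_ hc
  have hdd : (2:ℝ) ≤ d := by exact_mod_cast hd
  have hkm : k ≤ m := le_trans (Nat.le_mul_of_pos_right _ (by omega)) hkd
  have h1 : (1 + Real.sqrt (2 * L / ((m : ℝ) - (k : ℝ)) ^ (d - 1))) ^ (-(1 : ℝ) / 2) ≤ 1 := by
    apply Real.rpow_le_one_of_one_le_of_nonpos
    · linarith [Real.sqrt_nonneg (2 * L / ((m : ℝ) - (k : ℝ)) ^ (d - 1))]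
    · norm_num
  have hm0 : (0:ℝ) ≤ m := by positivity
  have h2 : (2 * Real.exp 1) ^ (-(1 : ℝ) / 2) = √((2 * exp 1)⁻¹) := by
    rw [Real.sqrt_eq_rpow, Real.inv_rpow (by positivity), ← Real.rpow_neg (by positivity)]
    norm_num
  have h3 : (m : ℝ) ^ (((d : ℝ) - 1) / 2) = √((m:ℝ)^(d-1)) := by
    rw [Real.sqrt_eq_rpow, ← Real.rpow_natCast, ← Real.rpow_mul hm0, Nat.cast_sub (by omega)]
    congr 1; push_cast; ring
  have h4 : (m:ℝ)^(d-1) / exp 1 ≤ (((m-k)^(d-1) : ℕ) : ℝ) := by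
    rw [Nat.cast_pow, Nat.cast_sub hkm, div_le_iff₀ (exp_pos _)]
    have hkd' : (k:ℝ) * d ≤ m := by exact_mod_cast hkd
    have hk' : (1:ℝ) ≤ k := by exact_mod_cast hk
    have e1 : (m:ℝ) ≤ ((m:ℝ)-k) * (1 + 1/((d:ℝ)-1)) := by
      have : (0:ℝ) < d - 1 := by linarith
      have : ((m:ℝ)-k) * (1 + 1/((d:ℝ)-1)) = ((m:ℝ)-k)*d/(d-1) := by field_simp; ring
      rw [this, le_div_iff₀ (by linarith)]
      nlinarith
    have e2 : (1 + 1/((d:ℝ)-1))^(d-1) ≤ exp 1 := by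
      have := Real.add_one_le_exp (1/((d:ℝ)-1))
      calc (1 + 1/((d:ℝ)-1))^(d-1) ≤ (exp (1/((d:ℝ)-1)))^(d-1) := by
            apply pow_le_pow_left₀
            · have : (0:ℝ) < d - 1 := by linarith
              positivity
            · linarith
        _ = exp 1 := by
            rw [← Real.exp_nat_mul, Nat.cast_sub (by omega)]
            congr 1
            have : (d:ℝ) - 1 ≠ 0 := by linarith
            push_cast; field_simp
    have hmk : (0:ℝ) ≤ (m:ℝ)-k := by rw [← Nat.cast_sub hkm]; positivity
    calc (m:ℝ)^(d-1) ≤ (((m:ℝ)-k) * (1 + 1/((d:ℝ)-1)))^(d-1) := by gcongr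
      _ = ((m:ℝ)-k)^(d-1) * (1 + 1/((d:ℝ)-1))^(d-1) := mul_pow _ _ _
      _ ≤ _ := by gcongr
  rw [h2, h3]
  by_cases hM : L - log L ≤ 0
  · rw [Real.sqrt_eq_zero_of_nonpos hM]
    simp only [mul_zero, zero_mul]
    positivity
  · push Not at hM
    calc √(2 * rexp 1)⁻¹ * ↑d * √(↑m ^ (d - 1)) * √(L - log L) *
        (1 + Real.sqrt (2 * L / ((m : ℝ) - (k : ℝ)) ^ (d - 1))) ^ (-(1 : ℝ) / 2)
       ≤ √(2 * rexp 1)⁻¹ * ↑d * √(↑m ^ (d - 1)) * √(L - log L) * 1 := by gcongr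
      _ = d * √((2 * exp 1)⁻¹ * (m:ℝ)^(d-1) * (L - log L)) := by
        rw [Real.sqrt_mul (by positivity), Real.sqrt_mul (by positivity)]; ring
      _ ≤ _ := by
        gcongr
        calc (2 * exp 1)⁻¹ * (m:ℝ)^(d-1) * (L - log L) = ((m:ℝ)^(d-1) / exp 1) * ((L - log L)/2) := by
              field_simp
          _ ≤ (((m-k)^(d-1) : ℕ) : ℝ) * ((L - log L)/2) := by gcongr
          _ = _ := by ring

/-- Main lower bound (Lemma 2): for `m, d ≥ 2` with `⌊m/d⌋ ≥ e^6` and `N = m^d`, a jittered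
sampling point set `P` of `N` points satisfies the explicit lower bound
`E[D*(P)] ≥ (2e)^(−1/2)·d·m^((d−1)/2)·√(ln⌊m/d⌋ − ln ln⌊m/d⌋)
  ·(1 + √(2 ln⌊m/d⌋/(m−⌊m/d⌋)^(d−1)))^(−1/2)·(1 − exp(−√(ln⌊m/d⌋)/(1.5·e^(169/6)·√π)))`. -/
theorem jittered_sampling_lower_bound_explicit (m d : ℕ) (hm : 2 ≤ m) (hd : 2 ≤ d)
    (hk : Real.exp 6 ≤ ((m / d : ℕ) : ℝ)) :
    (2 * Real.exp 1) ^ (-(1 : ℝ) / 2) * d * (m : ℝ) ^ (((d : ℝ) - 1) / 2) *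
        Real.sqrt (Real.log ((m / d : ℕ) : ℝ) - Real.log (Real.log ((m / d : ℕ) : ℝ))) *
        (1 + Real.sqrt (2 * Real.log ((m / d : ℕ) : ℝ) / ((m : ℝ) - ((m / d : ℕ) : ℝ)) ^ (d - 1)))
          ^ (-(1 : ℝ) / 2) *
        (1 - Real.exp (- Real.sqrt (Real.log ((m / d : ℕ) : ℝ)) /
            (1.5 * Real.exp (169 / 6) * Real.sqrt Real.pi)))
      ≤ expStarDisc m d := by
  set k := m / d with hkdef
  have hkd : k * d ≤ m := Nat.div_mul_le_self m d
  have hkR : (1:ℝ) < k := lt_of_lt_of_le (by simp) hk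
  have hk1 : 1 ≤ k := by exact_mod_cast hkR.le
  have hk0 : (0:ℝ) < k := by linarith
  have h2k : 2 * k ≤ m := le_trans (by rw [mul_comm]; exact Nat.mul_le_mul_left k hd) hkd
  set L := Real.log (k:ℝ) with hLdef
  have hL : 6 ≤ L := (Real.le_log_iff_exp_le hk0).2 hk
  have hexpL : Real.exp L = k := Real.exp_log hk0
  set C := 1.5 * Real.exp (169 / 6) * Real.sqrt Real.pi with hC
  have hC1 : 1 ≤ C := by
    have h1 : 1 ≤ Real.exp (169/6) := Real.one_le_exp (by norm_num)
    have h2 : 1 ≤ √Real.pi := Real.one_le_sqrt.2 (by linarith [Real.pi_gt_three])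
    have h3 : (1:ℝ) ≤ 1.5 * Real.exp (169/6) := by norm_num; linarith
    exact one_le_mul_of_one_le_of_one_le h3 h2
  have hn : Real.exp L ≤ (((m-k)^(d-1) : ℕ) : ℝ) := by
    rw [hexpL]
    have h1 : k ≤ (m-k)^(d-1) := le_trans (by omega : k ≤ m-k) (Nat.le_self_pow (by omega) _)
    exact_mod_cast h1
  have htail := jl_tail ((m-k)^(d-1)) L hL hn
  have hmain := jl_main m d (m-k) (by omega) _ _ (Real.sqrt_nonneg _) htail
  have hmk : m - (m-k) = k := by omega
  rw [hmk] at hmain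
  have hc0 : 0 ≤ 1 - Real.exp (- Real.sqrt L / C) := by
    have : Real.exp (- Real.sqrt L / C) ≤ 1 := by
      apply Real.exp_le_one_iff.2
      apply div_nonpos_of_nonpos_of_nonneg
      · simp
      · linarith
    linarith
  refine le_trans (jl_final m d k hd hkd hk1 L _ hc0) (le_trans ?_ hmain)
  apply mul_le_mul_of_nonneg_left _ (by positivity)
  apply sub_le_sub_left
  rw [← hC]
  have hp1 : √L * Real.exp (-L) / C ≤ 1 := by
    rw [div_le_one (by linarith)]
    refine le_trans ?_ hC1
    rw [Real.exp_neg, ← div_eq_mul_inv, div_le_one (Real.exp_pos _)]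
    have h1 : √L ≤ L := Real.sqrt_le_iff.2 ⟨by linarith, by nlinarith⟩
    linarith [Real.add_one_le_exp L]
  calc (1 - √L * Real.exp (-L) / C)^k ≤ (Real.exp (-(√L * Real.exp (-L) / C)))^k := by
        apply pow_le_pow_left₀ (by linarith)
        linarith [Real.add_one_le_exp (-(√L * Real.exp (-L) / C))]
    _ = Real.exp (- √L / C) := by
        rw [← Real.exp_nat_mul, Real.exp_neg L, hexpL]
        congr 1
        field_simp
end
end
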